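/- Assume N ≥ 1 and σ > 0 with 2σ+2 < 2** (2** = 2N/(N-4) if N ≥ 5, 2** = ∞ if N ≤ 4). Let I = inf{K(u) : u ∈ H²(ℝ^N), ‖u‖_{L^{2σ+2}} = 1}, where K(u) = ∫_{ℝ^N}|Δu|²dx + ∫_{ℝ^N}|u|²dx. Then: (i) I > 0, and for any sequence (u_n) ⊂ H²(ℝ^N) with ‖u_n‖_{L^{2σ+2}} → 1 and K(u_n) → I there exist a subsequence (u_{n_k}), points (x_k) ⊂ ℝ^N, and a minimizer u of K on {‖u‖_{L^{2σ+2}} = 1} such that u_{n_k}(·+x_k) → u strongly in H²(ℝ^N); (ii) every minimizer of K on {‖u‖_{L^{2σ+2}} = 1} is an optimal function for the Gagliardo–Nirenberg–Sobolev inequality, i.e. it realizes the supremum B(N,σ) = sup{ ‖u‖_{L^{2σ+2}}^{2σ+2} / (‖Δu‖_{L²}^{Nσ/2}‖u‖_{L²}^{2+2σ-Nσ/2}) : u ∈ H²(ℝ^N), u ≠ 0 }. -/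

import Mathlib

open MeasureTheory Filter Topology

noncomputable section

abbrev Esp (N : ℕ) := EuclideanSpace ℝ (Fin N)

/-- Smooth compactly supported test functions. -/
def TestFun {N : ℕ} (φ : Esp N → ℂ) : Prop :=
  ContDiff ℝ (⊤ : ℕ∞) φ ∧ HasCompactSupport φ

/-- Partial derivative in the `i`-th coordinate direction. -/
def pderivC {N : ℕ} (i : Fin N) (φ : Esp N → ℂ) : Esp N → ℂ :=
  fun x => fderiv ℝ φ x (EuclideanSpace.single i (1 : ℝ))

/-- The Laplacian of a (smooth) function. -/
def lapC {N : ℕ} (φ : Esp N → ℂ) : Esp N → ℂ :=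
  fun x => ∑ i, pderivC i (pderivC i φ) x

/-- `v` is the weak `i`-th partial derivative of `u`. -/
def IsWeakPDeriv {N : ℕ} (u : Esp N → ℂ) (i : Fin N) (v : Esp N → ℂ) : Prop :=
  ∀ φ : Esp N → ℂ, TestFun φ → ∫ x, u x * pderivC i φ x = - ∫ x, v x * φ x

/-- `v` is the weak Laplacian of `u`. -/
def IsWeakLap {N : ℕ} (u v : Esp N → ℂ) : Prop :=
  ∀ φ : Esp N → ℂ, TestFun φ → ∫ x, u x * lapC φ x = ∫ x, v x * φ x

/-- An element of the Sobolev space `H²(ℝ^N, ℂ)`: an `L²` function together with its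
weak partial derivatives and its weak Laplacian, all in `L²`. -/
structure H2 (N : ℕ) where
  u : Esp N → ℂ
  grad : Fin N → Esp N → ℂ
  lapl : Esp N → ℂ
  u_mem : MemLp u 2 (volume : Measure (Esp N))
  grad_mem : ∀ i, MemLp (grad i) 2 (volume : Measure (Esp N))
  lapl_mem : MemLp lapl 2 (volume : Measure (Esp N))
  grad_spec : ∀ i, IsWeakPDeriv u i (grad i)
  lapl_spec : IsWeakLap u lapl

namespace H2

variable {N : ℕ}

/-- `∫ |u|²`. -/
def massSq (U : H2 N) : ℝ := ∫ x, ‖U.u x‖ ^ 2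

/-- `∫ |∇u|²`. -/
def gradSq (U : H2 N) : ℝ := ∑ i, ∫ x, ‖U.grad i x‖ ^ 2

/-- `∫ |Δu|²`. -/
def lapSq (U : H2 N) : ℝ := ∫ x, ‖U.lapl x‖ ^ 2

/-- `∫ |u|^{2σ+2}`. -/
def pPow (σ : ℝ) (U : H2 N) : ℝ := ∫ x, ‖U.u x‖ ^ (2 * σ + 2)

/-- The energy `E(u) = ∫|Δu|² - 2∫|∇u|² - (1/(σ+1))∫|u|^{2σ+2}`. -/
def energy (σ : ℝ) (U : H2 N) : ℝ :=
  U.lapSq - 2 * U.gradSq - (1 / (σ + 1)) * U.pPow σ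

/-- The square of the `H²` norm. -/
def h2NormSq (U : H2 N) : ℝ := U.massSq + U.gradSq + U.lapSq

/-- `u` does not vanish almost everywhere. -/
def Nontriv (U : H2 N) : Prop := ¬ (U.u =ᵐ[(volume : Measure (Esp N))] 0)

end H2

/-- `E_min(m) = inf {E(u) : u ∈ H², ∫|u|² = m}`, with values in `EReal`. -/
def EminE (N : ℕ) (σ m : ℝ) : EReal :=
  ⨅ (U : H2 N) (_ : U.massSq = m), ((U.energy σ : ℝ) : EReal)

/-- The `L^p` norm (as a real number) of a function on `ℝ^N`. -/
def rLp {N : ℕ} (p : ℝ) (f : Esp N → ℂ) : ℝ :=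
  (eLpNorm f (ENNReal.ofReal p) (volume : Measure (Esp N))).toReal


/-- The best constant `B(N,σ)` in the Gagliardo–Nirenberg–Sobolev inequality
`‖u‖_{L^{2σ+2}}^{2σ+2} ≤ B ‖Δu‖_{L²}^{Nσ/2} ‖u‖_{L²}^{2+2σ-Nσ/2}`. -/
def GNconst (N : ℕ) (σ : ℝ) : ℝ :=
  sSup {r : ℝ | ∃ U : H2 N, U.Nontriv ∧
    r = U.pPow σ /
      (rLp 2 U.lapl ^ ((N : ℝ) * σ / 2) * rLp 2 U.u ^ (2 + 2 * σ - (N : ℝ) * σ / 2))}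

/-- `k* = (σ+1)^{1/σ} B(N,σ)^{-1/σ}`. -/
def kstar (N : ℕ) (σ : ℝ) : ℝ := (σ + 1) ^ (1 / σ) * GNconst N σ ^ (-(1 / σ))

/-- Strong `H²` convergence of `v k (· + xs k)` to `U`. -/
def H2TendstoTrans {N : ℕ} (v : ℕ → H2 N) (xs : ℕ → Esp N) (U : H2 N) : Prop :=
  Tendsto (fun k => eLpNorm (fun x => (v k).u (x + xs k) - U.u x) 2
      (volume : Measure (Esp N))) atTop (nhds 0) ∧
  (∀ i, Tendsto (fun k => eLpNorm (fun x => (v k).grad i (x + xs k) - U.grad i x) 2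
      (volume : Measure (Esp N))) atTop (nhds 0)) ∧
  Tendsto (fun k => eLpNorm (fun x => (v k).lapl (x + xs k) - U.lapl x) 2
      (volume : Measure (Esp N))) atTop (nhds 0)

/-- `u` is a weak (`H^{-2}`) solution of `Δ²u + 2Δu + (1+c)u - |u|^{2σ}u = 0`. -/
def SolvesSW {N : ℕ} (σ c : ℝ) (U : H2 N) : Prop :=
  ∀ φ : Esp N → ℂ, TestFun φ →
    (∫ x, U.lapl x * lapC φ x) + 2 * (∫ x, U.lapl x * φ x) +
        ((1 + c : ℝ) : ℂ) * (∫ x, U.u x * φ x) -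
        (∫ x, ((‖U.u x‖ ^ (2 * σ) : ℝ) : ℂ) * U.u x * φ x) = 0

/-- `T_c(u) = ∫|Δu|² - 2∫|∇u|² + (1+c)∫|u|²`. -/
def Tfun {N : ℕ} (c : ℝ) (U : H2 N) : ℝ := U.lapSq - 2 * U.gradSq + (1 + c) * U.massSq

/-- `t(c) = inf {T_c(u) : ∫|u|^{2σ+2} = 1}`. -/
def tmin (N : ℕ) (σ c : ℝ) : ℝ := sInf {r : ℝ | ∃ U : H2 N, U.pPow σ = 1 ∧ r = Tfun c U}

/-- The action `S_c(u) = E(u) + (1+c)‖u‖_{L²}² = T_c(u) - (1/(σ+1))∫|u|^{2σ+2}`. -/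
def action {N : ℕ} (σ c : ℝ) (U : H2 N) : ℝ := U.energy σ + (1 + c) * U.massSq

/-- `K(u) = ∫|Δu|² + ∫|u|²`. -/
def Kfun {N : ℕ} (U : H2 N) : ℝ := U.lapSq + U.massSq

/-- `I = inf {K(u) : ‖u‖_{L^{2σ+2}} = 1}`. -/
def Iconst (N : ℕ) (σ : ℝ) : ℝ :=
  sInf {r : ℝ | ∃ U : H2 N, rLp (2 * σ + 2) U.u = 1 ∧ r = Kfun U}

/-
An `H²` function is within a small `L^p` distance of its projection to low frequencies, uniformly on
bounded sets of `K`, because `‖1_A f̂‖₂` on a dyadic annulus of radius `ρ` is at most a multiple of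
`ρ⁻² ‖Δf‖₂` and Bernstein's inequality costs only `ρ ^ (N (1/2 - 1/p))`, with exponent below `2`. If
`‖u_n‖_p` stays away from `0`, the low-frequency parts are therefore not uniformly small, and
translating to points where they are large produces a nonzero weak limit `U` of the `u_n`. The
energy `K` splits exactly along `u_n = U + r_n`, and the `L^p` mass splits because `r_n → 0` locally
in `L^p`, once more by projecting to low frequencies. Since `p > 2`, sharing the mass between `U`
and `r_n` would cost strictly more energy than the infimum, so `K(r_n) → 0`.

The functional `K` is the sum `a + b` of `a = ‖Δu‖₂²` and `b = ‖u‖₂²`; dilations rescale these two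
numbers, and optimising over the scale turns the bound by `a + b` into a bound by the product
`a ^ θ b ^ (1 - θ)`. By weighted AM-GM the product is in turn bounded by `a + b` with the matching
constant, so a minimizer of `K` maximizes the Gagliardo–Nirenberg quotient.
-/

section Cutoff

open scoped ContDiff

variable {E F : Type*} [NormedAddCommGroup E] [InnerProductSpace ℝ E] [FiniteDimensional ℝ E]
  [NormedAddCommGroup F] [NormedSpace ℝ F]

/-- The smooth bump equal to `1` on the unit ball and supported in the ball of radius `2`,
stretched by the factor `n + 1`. It truncates Schwartz functions to test functions. -/
def cutoff (E : Type*) [NormedAddCommGroup E] [InnerProductSpace ℝ E] [FiniteDimensional ℝ E]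
    (n : ℕ) (x : E) : ℝ :=
  (⟨1, 2, one_pos, one_lt_two⟩ : ContDiffBump (0 : E)) ((n + 1 : ℝ)⁻¹ • x)

lemma contDiff_cutoff (n : ℕ) : ContDiff ℝ ∞ (cutoff E n) :=
  (ContDiffBump.contDiff _).comp (contDiff_const_smul _)

lemma hasCompactSupport_cutoff (n : ℕ) : HasCompactSupport (cutoff E n) :=
  (ContDiffBump.hasCompactSupport _).comp_smul (by positivity)

lemma norm_cutoff_le_one (n : ℕ) (x : E) : ‖cutoff E n x‖ ≤ 1 := by
  rw [cutoff, Real.norm_of_nonneg (ContDiffBump.nonneg _)]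
  exact ContDiffBump.le_one _

lemma tendsto_cutoff (x : E) : Tendsto (fun n ↦ cutoff E n x) atTop (𝓝 1) := by
  let χ : ContDiffBump (0 : E) := ⟨1, 2, one_pos, one_lt_two⟩
  have hscale : Tendsto (fun n : ℕ ↦ (n + 1 : ℝ)⁻¹ • x) atTop (𝓝 0) := by
    simpa using (tendsto_one_div_add_atTop_nhds_zero_nat (𝕜 := ℝ)).smul_const x
  have hχ : χ 0 = 1 := χ.one_of_mem_closedBall (by simp [χ])
  exact hχ ▸ (χ.continuous.tendsto 0).comp hscale

lemma exists_norm_fderiv_cutoff_le (E : Type*) [NormedAddCommGroup E] [InnerProductSpace ℝ E]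
    [FiniteDimensional ℝ E] :
    ∃ C, ∀ (n : ℕ) (x : E), ‖fderiv ℝ (cutoff E n) x‖ ≤ C * (n + 1 : ℝ)⁻¹ := by
  let χ : ContDiffBump (0 : E) := ⟨1, 2, one_pos, one_lt_two⟩
  have hχ : Continuous (fderiv ℝ χ) := χ.contDiff.continuous_fderiv (n := ∞) (by simp)
  obtain ⟨C, hC⟩ := hχ.bounded_above_of_compact_support (χ.hasCompactSupport.fderiv (𝕜 := ℝ))
  refine ⟨C, fun n x ↦ ?_⟩
  have hderiv : fderiv ℝ (cutoff E n) x = (n + 1 : ℝ)⁻¹ • fderiv ℝ χ ((n + 1 : ℝ)⁻¹ • x) :=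
    fderiv_comp_smul _
  rw [hderiv, norm_smul, Real.norm_of_nonneg (by positivity), mul_comm]
  gcongr
  exact hC _

variable [MeasurableSpace E] {μ : Measure E} {g : E → F}

lemma integrable_cutoff_smul [BorelSpace E] (hg : Integrable g μ) (n : ℕ) :
    Integrable (fun x ↦ cutoff E n x • g x) μ :=
  hg.bdd_smul 1 (contDiff_cutoff n).continuous.aestronglyMeasurable
    (.of_forall (norm_cutoff_le_one n))

lemma integrable_fderiv_cutoff_smul [BorelSpace E] (hg : Integrable g μ) (m : E) (n : ℕ) :
    Integrable (fun x ↦ fderiv ℝ (cutoff E n) x m • g x) μ := by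
  obtain ⟨C, hC⟩ := exists_norm_fderiv_cutoff_le E
  have hcont : Continuous (fderiv ℝ (cutoff E n)) :=
    (contDiff_cutoff n).continuous_fderiv (by simp)
  refine hg.bdd_smul (C * (n + 1 : ℝ)⁻¹ * ‖m‖)
    (hcont.clm_apply continuous_const).aestronglyMeasurable (.of_forall fun x ↦ ?_)
  exact (ContinuousLinearMap.le_opNorm _ _).trans (by gcongr; exact hC n x)

lemma tendsto_integral_cutoff_smul [BorelSpace E] (hg : Integrable g μ) :
    Tendsto (fun n ↦ ∫ x, cutoff E n x • g x ∂μ) atTop (𝓝 (∫ x, g x ∂μ)) := by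
  refine tendsto_integral_of_dominated_convergence (‖g ·‖)
    (fun n ↦ (integrable_cutoff_smul hg n).1) hg.norm
    (fun n ↦ .of_forall fun x ↦ ?_) (.of_forall fun x ↦ ?_)
  · rw [norm_smul]
    exact mul_le_of_le_one_left (norm_nonneg _) (norm_cutoff_le_one n x)
  · simpa using (tendsto_cutoff x).smul_const (g x)

lemma tendsto_integral_fderiv_cutoff_smul (hg : Integrable g μ) (m : E) :
    Tendsto (fun n ↦ ∫ x, fderiv ℝ (cutoff E n) x m • g x ∂μ) atTop (𝓝 0) := by
  obtain ⟨C, hC⟩ := exists_norm_fderiv_cutoff_le E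
  have hbound (n : ℕ) : ‖∫ x, fderiv ℝ (cutoff E n) x m • g x ∂μ‖ ≤
      C * (n + 1 : ℝ)⁻¹ * ‖m‖ * ∫ x, ‖g x‖ ∂μ := by
    rw [← integral_const_mul]
    refine norm_integral_le_of_norm_le (hg.norm.const_mul _) (.of_forall fun x ↦ ?_)
    rw [norm_smul]
    gcongr
    exact (ContinuousLinearMap.le_opNorm _ _).trans (by gcongr; exact hC n x)
  have hscale := tendsto_one_div_add_atTop_nhds_zero_nat (𝕜 := ℝ)
  refine squeeze_zero_norm hbound ?_
  simpa using ((hscale.const_mul C).mul_const ‖m‖).mul_const (∫ x, ‖g x‖ ∂μ)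

end Cutoff

notation "L²(" E ")" => Lp ℂ 2 (volume : Measure E)

section WeakDivergence

open scoped ContDiff SchwartzMap FourierTransform LineDeriv

variable {ι E : Type*} [Fintype ι] [NormedAddCommGroup E] [InnerProductSpace ℝ E]

/-- The Fourier symbol `2πi⟨ξ, m⟩` of the derivative in direction `m`. -/
def derivSymbol (m ξ : E) : ℂ := 2 * Real.pi * Complex.I * inner ℝ ξ m

lemma continuous_derivSymbol (m : E) : Continuous (derivSymbol m) := by
  unfold derivSymbol
  fun_prop

variable [FiniteDimensional ℝ E] [MeasurableSpace E] [BorelSpace E]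
  {m : ι → E} {v : ι → E → ℂ} {w : E → ℂ}

/-- `∑ i, ∂_{m i} (v i) = w` in the sense of distributions. A weak partial derivative is the case
of a single index; the weak Laplacian is the weak divergence of the weak gradient. -/
def HasWeakDiv (m : ι → E) (v : ι → E → ℂ) (w : E → ℂ) : Prop :=
  ∀ φ : E → ℂ, ContDiff ℝ ∞ φ → HasCompactSupport φ →
    ∑ i, ∫ x, v i x * fderiv ℝ φ x (m i) = -∫ x, w x * φ x

lemma HasWeakDiv.schwartz (h : HasWeakDiv m v w) (hv : ∀ i, MemLp (v i) 2) (hw : MemLp w 2)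
    (ψ : 𝓢(E, ℂ)) :
    ∑ i, ∫ x, v i x * fderiv ℝ ψ x (m i) = -∫ x, w x * ψ x := by
  have hvψ (i : ι) : Integrable fun x ↦ v i x * ψ x := (hv i).integrable_mul (ψ.memLp 2 _)
  have hvψ' (i : ι) : Integrable fun x ↦ v i x * fderiv ℝ ψ x (m i) :=
    (hv i).integrable_mul ((∂_{m i} ψ : 𝓢(E, ℂ)).memLp 2 _)
  let φ (n : ℕ) (x : E) : ℂ := cutoff E n x • ψ x
  have hproduct (n : ℕ) (i : ι) (x : E) : v i x * fderiv ℝ (φ n) x (m i) =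
      cutoff E n x • (v i x * fderiv ℝ ψ x (m i)) +
        fderiv ℝ (cutoff E n) x (m i) • (v i x * ψ x) := by
    rw [fderiv_fun_smul ((contDiff_cutoff n).differentiable (by simp) x) ψ.differentiableAt]
    simp [mul_add, mul_left_comm]
  have hparts (n : ℕ) (i : ι) : ∫ x, v i x * fderiv ℝ (φ n) x (m i) =
      (∫ x, cutoff E n x • (v i x * fderiv ℝ ψ x (m i))) +
        ∫ x, fderiv ℝ (cutoff E n) x (m i) • (v i x * ψ x) := by
    simp only [hproduct]
    exact integral_add (integrable_cutoff_smul (hvψ' i) n)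
      (integrable_fderiv_cutoff_smul (hvψ i) (m i) n)
  have hleft : Tendsto (fun n ↦ ∑ i, ∫ x, v i x * fderiv ℝ (φ n) x (m i)) atTop
      (𝓝 (∑ i, ∫ x, v i x * fderiv ℝ ψ x (m i))) := by
    simp only [hparts]
    refine tendsto_finsetSum _ fun i _ ↦ ?_
    simpa using (tendsto_integral_cutoff_smul (hvψ' i)).add
      (tendsto_integral_fderiv_cutoff_smul (hvψ i) (m i))
  have hright : Tendsto (fun n ↦ -∫ x, w x * φ n x) atTop (𝓝 (-∫ x, w x * ψ x)) := by
    simp only [φ, mul_smul_comm]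
    exact (tendsto_integral_cutoff_smul (hw.integrable_mul (ψ.memLp 2 _))).neg
  refine tendsto_nhds_unique hleft (hright.congr fun n ↦ (h (φ n) ?_ ?_).symm)
  · exact (contDiff_cutoff n).smul (ψ.smooth _)
  · exact (hasCompactSupport_cutoff n).smul_right

lemma integral_mul_fourier {f : E → ℂ} (hf : MemLp f 2) (ψ : 𝓢(E, ℂ)) :
    ∫ x, f x * (𝓕 ψ : 𝓢(E, ℂ)) x =
      ∫ ξ, ψ ξ * (𝓕 (hf.toLp f) : L²(E)) ξ := by
  have h := congrArg (fun T ↦ T ψ) (Lp.fourier_toTemperedDistribution_eq (hf.toLp f))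
  simp only [TemperedDistribution.fourier_apply, Lp.toTemperedDistribution_apply,
    smul_eq_mul] at h
  rw [← h]
  refine integral_congr_ae ?_
  filter_upwards [hf.coeFn_toLp] with x hx
  rw [hx, mul_comm]

lemma ae_eq_of_forall_schwartz {f g : E → ℂ} (hf : LocallyIntegrable f)
    (hg : LocallyIntegrable g)
    (h : ∀ ψ : 𝓢(E, ℂ), ∫ x, ψ x * f x = ∫ x, ψ x * g x) : f =ᵐ[volume] g := by
  refine ae_eq_of_integral_contDiff_smul_eq hf hg fun k hk hkc ↦ ?_
  have hsupp : HasCompactSupport (Complex.ofRealCLM ∘ k) := hkc.comp_left rfl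
  have hsmooth : ContDiff ℝ ∞ (Complex.ofRealCLM ∘ k) := by fun_prop
  simpa using h (hsupp.toSchwartzMap hsmooth)

lemma locallyIntegrable_derivSymbol_mul {f : E → ℂ} (hf : LocallyIntegrable f) (m : E) :
    LocallyIntegrable fun ξ ↦ derivSymbol m ξ * f ξ := by
  rw [← locallyIntegrableOn_univ] at hf ⊢
  exact hf.continuousOn_mul (continuous_derivSymbol m).continuousOn
    isOpen_univ.isLocallyClosed

lemma exists_fderiv_fourier_eq (ψ : 𝓢(E, ℂ)) (m : E) :
    ∃ Ψ : 𝓢(E, ℂ), (∀ ξ, Ψ ξ = -(derivSymbol m ξ * ψ ξ)) ∧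
      ∀ x, fderiv ℝ (𝓕 ψ : 𝓢(E, ℂ)) x m = (𝓕 Ψ : 𝓢(E, ℂ)) x := by
  have hgrowth : (inner ℝ · m : E → ℝ).HasTemperateGrowth := by fun_prop
  refine ⟨-(2 * Real.pi * Complex.I) • SchwartzMap.smulLeftCLM ℂ (inner ℝ · m) ψ,
    fun ξ ↦ ?_, fun x ↦ ?_⟩
  · simp [SchwartzMap.smulLeftCLM_apply_apply hgrowth, derivSymbol, mul_assoc]
  · rw [← SchwartzMap.lineDerivOp_fourier_eq, SchwartzMap.lineDerivOp_apply_eq_fderiv]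

theorem HasWeakDiv.fourier_ae_eq (h : HasWeakDiv m v w) (hv : ∀ i, MemLp (v i) 2)
    (hw : MemLp w 2) :
    (𝓕 (hw.toLp w) : L²(E)) =ᵐ[volume] fun ξ ↦
      ∑ i, derivSymbol (m i) ξ * (𝓕 ((hv i).toLp (v i)) : L²(E)) ξ := by
  refine ae_eq_of_forall_schwartz ((Lp.memLp _).locallyIntegrable (by norm_num))
    (locallyIntegrable_finsetSum _ fun i _ ↦ locallyIntegrable_derivSymbol_mul
      ((Lp.memLp _).locallyIntegrable (by norm_num)) _) fun ψ ↦ ?_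
  choose Ψ hΨ hΨ' using fun i ↦ exists_fderiv_fourier_eq ψ (m i)
  let V (i : ι) : L²(E) := 𝓕 ((hv i).toLp (v i))
  have hsymbol (i : ι) (ξ : E) : ψ ξ * (derivSymbol (m i) ξ * V i ξ) = -(Ψ i ξ * V i ξ) := by
    rw [hΨ]
    ring
  have hΨV (i : ι) : Integrable fun ξ ↦ -(Ψ i ξ * V i ξ) :=
    (((Ψ i).memLp 2 _).integrable_mul (Lp.memLp (V i))).neg
  calc ∫ ξ, ψ ξ * (𝓕 (hw.toLp w) : L²(E)) ξ
      = ∑ i, -∫ x, v i x * (𝓕 (Ψ i) : 𝓢(E, ℂ)) x := by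
        rw [← integral_mul_fourier hw, ← neg_eq_iff_eq_neg.2 (h.schwartz hv hw (𝓕 ψ)),
          Finset.sum_neg_distrib]
        simp only [hΨ']
    _ = ∑ i, ∫ ξ, -(Ψ i ξ * V i ξ) := by simp only [integral_mul_fourier (hv _), integral_neg, V]
    _ = ∫ ξ, ψ ξ * ∑ i, derivSymbol (m i) ξ * V i ξ := by
        rw [← integral_finsetSum _ fun i _ ↦ hΨV i]
        simp only [Finset.mul_sum, hsymbol]

end WeakDivergence

section LpNorm

open scoped ENNReal NNReal

variable {α F : Type*} [MeasurableSpace α] {μ : Measure α} [NormedAddCommGroup F]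

lemma eLpNorm_le_rpow_mul_eLpNorm_two_rpow {g : α → F} {M : ℝ≥0} {p : ℝ} (hp : 2 < p)
    (hM : ∀ᵐ x ∂μ, ‖g x‖ₑ ≤ M) :
    eLpNorm g (ENNReal.ofReal p) μ ≤ (M : ℝ≥0∞) ^ (1 - 2 / p) * eLpNorm g 2 μ ^ (2 / p) := by
  have hp0 : 0 < p := by linarith
  have hp_ne : ENNReal.ofReal p ≠ 0 := by simpa using hp0
  rw [eLpNorm_eq_lintegral_rpow_enorm_toReal hp_ne ENNReal.ofReal_ne_top,
    eLpNorm_eq_lintegral_rpow_enorm_toReal two_ne_zero ENNReal.ofNat_ne_top,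
    ENNReal.toReal_ofReal hp0.le, ENNReal.toReal_ofNat]
  have hpow : ∫⁻ x, ‖g x‖ₑ ^ p ∂μ ≤ (M : ℝ≥0∞) ^ (p - 2) * ∫⁻ x, ‖g x‖ₑ ^ (2 : ℝ) ∂μ := by
    rw [← lintegral_const_mul' _ _
      (ENNReal.rpow_ne_top_of_nonneg (by linarith) ENNReal.coe_ne_top)]
    refine lintegral_mono_ae ?_
    filter_upwards [hM] with x hx
    rw [← sub_add_cancel p 2, ENNReal.rpow_add_of_nonneg _ _ (by linarith) two_pos.le,
      add_sub_cancel_right]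
    gcongr
  calc (∫⁻ x, ‖g x‖ₑ ^ p ∂μ) ^ (1 / p)
      ≤ ((M : ℝ≥0∞) ^ (p - 2) * ∫⁻ x, ‖g x‖ₑ ^ (2 : ℝ) ∂μ) ^ (1 / p) := by gcongr
    _ = (M : ℝ≥0∞) ^ (1 - 2 / p) * ((∫⁻ x, ‖g x‖ₑ ^ (2 : ℝ) ∂μ) ^ (1 / 2 : ℝ)) ^ (2 / p) := by
        rw [ENNReal.mul_rpow_of_nonneg _ _ (by positivity), ← ENNReal.rpow_mul,
          ← ENNReal.rpow_mul]
        congr 2 <;> field_simp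

lemma eLpNorm_sub_le_tsum {g : ℕ → α → F} {f : α → F} {p : ℝ≥0∞} (hp : 1 ≤ p)
    (hg : ∀ k, AEStronglyMeasurable (g k) μ) (hlim : TendstoInMeasure μ g atTop f) :
    eLpNorm (f - g 0) p μ ≤ ∑' k, eLpNorm (g (k + 1) - g k) p μ := by
  have hpartial (k : ℕ) :
      eLpNorm (g k - g 0) p μ ≤ ∑' k, eLpNorm (g (k + 1) - g k) p μ := by
    rw [← Finset.sum_range_sub g k]
    exact (eLpNorm_sum_le (fun j _ ↦ (hg (j + 1)).sub (hg j)) hp).trans (ENNReal.sum_le_tsum _)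
  obtain ⟨n, -, hn⟩ := hlim.exists_seq_tendsto_ae
  refine Lp.eLpNorm_le_of_ae_tendsto (u := atTop) (f := fun k ↦ g (n k) - g 0)
    (.of_forall fun k ↦ hpartial (n k)) (fun k ↦ (hg _).sub (hg 0)) ?_
  filter_upwards [hn] with x hx using hx.sub_const _

lemma integrable_indicator_of_memLp {f : α → F} {s : Set α} {p : ℝ≥0∞} (hf : MemLp f p μ)
    (hp : 1 ≤ p) (hs : MeasurableSet s) (hμs : μ s ≠ ∞) : Integrable (s.indicator f) μ := by
  rw [integrable_indicator_iff hs]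
  have : IsFiniteMeasure (μ.restrict s) := isFiniteMeasure_restrict.2 hμs
  exact (hf.restrict s).integrable hp

end LpNorm

section FrequencyProjection

open scoped SchwartzMap FourierTransform ENNReal

variable {E : Type*} [NormedAddCommGroup E] [InnerProductSpace ℝ E]

lemma continuous_uncurry_neg_innerₗ :
    Continuous fun q : E × E ↦ (-innerₗ E) q.1 q.2 := by
  simp only [LinearMap.neg_apply]
  exact continuous_inner.neg

variable [FiniteDimensional ℝ E] [MeasurableSpace E] [BorelSpace E] {g : E → ℂ}

lemma continuous_fourierInv_of_integrable (hg : Integrable g) : Continuous (𝓕⁻ g) :=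
  VectorFourier.fourierIntegral_continuous Real.continuous_fourierChar
    continuous_uncurry_neg_innerₗ hg

lemma enorm_fourierInv_le (g : E → ℂ) (x : E) : ‖𝓕⁻ g x‖ₑ ≤ eLpNorm g 1 volume := by
  rw [Real.fourierInv_eq, eLpNorm_one_eq_lintegral_enorm]
  refine (enorm_integral_le_lintegral_enorm _).trans_eq ?_
  simp only [← ofReal_norm, Circle.norm_smul]

lemma fourierInv_toLp_ae_eq (hg : Integrable g) (hg2 : MemLp g 2) :
    (𝓕⁻ (hg2.toLp g) : L²(E)) =ᵐ[volume] (𝓕⁻ g : E → ℂ) := by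
  refine ae_eq_of_forall_schwartz ((Lp.memLp _).locallyIntegrable (by norm_num))
    (continuous_fourierInv_of_integrable hg).locallyIntegrable fun ψ ↦ ?_
  have hdistribution := congrArg (fun T ↦ T ψ)
    (Lp.fourierInv_toTemperedDistribution_eq (hg2.toLp g))
  simp only [TemperedDistribution.fourierInv_apply, Lp.toTemperedDistribution_apply,
    smul_eq_mul] at hdistribution
  have hflip : (-innerₗ E).flip = -innerₗ E := by
    ext x y
    simp [real_inner_comm]
  calc ∫ x, ψ x * (𝓕⁻ (hg2.toLp g) : L²(E)) x
      = ∫ x, (𝓕⁻ ψ : 𝓢(E, ℂ)) x * hg2.toLp g x := hdistribution.symm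
    _ = ∫ x, (𝓕⁻ ψ : 𝓢(E, ℂ)) x * g x := by
        refine integral_congr_ae ?_
        filter_upwards [hg2.coeFn_toLp] with x hx
        rw [hx]
    _ = ∫ x, ψ x * 𝓕⁻ g x := by
        rw [SchwartzMap.fourierInv_coe]
        have hswap := VectorFourier.integral_fourierIntegral_smul_eq_flip (μ := volume)
          (ν := volume) Real.continuous_fourierChar continuous_uncurry_neg_innerₗ
          ψ.integrable hg
        rwa [hflip] at hswap

/-- The frequency projection `P_A f = 𝓕⁻ (1_A 𝓕 f)`. The inverse transform is the Fourier integral,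
so that for `A` of finite measure the projection is a genuine continuous function. -/
def freqProj (A : Set E) (f : L²(E)) : E → ℂ :=
  𝓕⁻ (A.indicator (𝓕 f : L²(E)))

variable {A B : Set E} (f : L²(E))

lemma integrable_indicator_fourier (hA : MeasurableSet A) (hμA : volume A ≠ ∞) :
    Integrable (A.indicator (𝓕 f : L²(E))) :=
  integrable_indicator_of_memLp (Lp.memLp _) one_le_two hA hμA

lemma continuous_freqProj (hA : MeasurableSet A) (hμA : volume A ≠ ∞) :
    Continuous (freqProj A f) :=
  continuous_fourierInv_of_integrable (integrable_indicator_fourier f hA hμA)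

lemma freqProj_union (hA : MeasurableSet A) (hμA : volume A ≠ ∞) (hB : MeasurableSet B)
    (hμB : volume B ≠ ∞) (hAB : Disjoint A B) :
    freqProj (A ∪ B) f = freqProj A f + freqProj B f := by
  unfold freqProj
  rw [Set.indicator_union_of_disjoint hAB]
  exact VectorFourier.fourierIntegral_add Real.continuous_fourierChar
    continuous_uncurry_neg_innerₗ (integrable_indicator_fourier f hA hμA)
    (integrable_indicator_fourier f hB hμB)

lemma fourierInv_indicator_ae_eq_freqProj (hA : MeasurableSet A) (hμA : volume A ≠ ∞) :
    (𝓕⁻ (((Lp.memLp (𝓕 f : L²(E))).indicator hA).toLp _) : L²(E)) =ᵐ[volume]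
      freqProj A f :=
  fourierInv_toLp_ae_eq (integrable_indicator_fourier f hA hμA) _

lemma eLpNorm_fourierInv : eLpNorm (𝓕⁻ f : L²(E)) 2 volume =
    eLpNorm f 2 volume := by
  rw [← Lp.enorm_def, ← Lp.enorm_def]
  exact (Lp.fourierTransformₗᵢ E ℂ).symm.enorm_map f

lemma eLpNorm_freqProj_two (hA : MeasurableSet A) (hμA : volume A ≠ ∞) :
    eLpNorm (freqProj A f) 2 volume =
      eLpNorm (A.indicator (𝓕 f : L²(E))) 2 volume := by
  rw [← eLpNorm_congr_ae (fourierInv_indicator_ae_eq_freqProj f hA hμA), eLpNorm_fourierInv]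
  exact eLpNorm_congr_ae (MemLp.coeFn_toLp _)

lemma eLpNorm_sub_freqProj_two (hA : MeasurableSet A) (hμA : volume A ≠ ∞) :
    eLpNorm (⇑f - freqProj A f) 2 volume =
      eLpNorm (Aᶜ.indicator (𝓕 f : L²(E))) 2 volume := by
  have hmem := (Lp.memLp (𝓕 f : L²(E))).indicator hA
  have hsub : ⇑f - freqProj A f =ᵐ[volume]
      (𝓕⁻ (𝓕 f - hmem.toLp _) : L²(E)) := by
    have hinv : (𝓕⁻ (𝓕 f - hmem.toLp _) : L²(E)) = f - 𝓕⁻ (hmem.toLp _) := by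
      simp [sub_eq_add_neg, FourierTransform.fourierInv_neg]
    rw [hinv]
    filter_upwards [fourierInv_indicator_ae_eq_freqProj f hA hμA,
      Lp.coeFn_sub f (𝓕⁻ (hmem.toLp _) : L²(E))] with x hproj hx
    rw [hx, Pi.sub_apply, Pi.sub_apply, hproj]
  rw [eLpNorm_congr_ae hsub, eLpNorm_fourierInv]
  refine eLpNorm_congr_ae ?_
  filter_upwards [Lp.coeFn_sub (𝓕 f) (hmem.toLp _), hmem.coeFn_toLp] with ξ hξ hind
  rw [hξ, Pi.sub_apply, hind, Set.indicator_compl, Pi.sub_apply]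

lemma enorm_freqProj_le (hA : MeasurableSet A) (x : E) :
    ‖freqProj A f x‖ₑ ≤ volume A ^ (1 / 2 : ℝ) *
      eLpNorm (A.indicator (𝓕 f : L²(E))) 2 volume := by
  refine (enorm_fourierInv_le _ x).trans ?_
  rw [eLpNorm_indicator_eq_eLpNorm_restrict hA, eLpNorm_indicator_eq_eLpNorm_restrict hA]
  refine (eLpNorm_le_eLpNorm_mul_rpow_measure_univ (q := 2) one_le_two
    (Lp.memLp (𝓕 f : L²(E))).1.restrict).trans_eq ?_
  rw [mul_comm, Measure.restrict_apply_univ]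
  norm_num

lemma eLpNorm_freqProj_le (hA : MeasurableSet A) (hμA : volume A ≠ ∞) {p : ℝ} (hp : 2 < p) :
    eLpNorm (freqProj A f) (ENNReal.ofReal p) volume ≤ volume A ^ (1 / 2 - 1 / p) *
      eLpNorm (A.indicator (𝓕 f : L²(E))) 2 volume := by
  set b := eLpNorm (A.indicator (𝓕 f : L²(E))) 2 volume with hb
  have hb_ne : b ≠ ∞ := ((Lp.memLp (𝓕 f : L²(E))).indicator hA).2.ne
  have hp0 : 0 < p := by linarith
  have hp2 : 2 / p < 1 := (div_lt_one hp0).2 hp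
  lift volume A ^ (1 / 2 : ℝ) * b to NNReal using ENNReal.mul_ne_top
    (ENNReal.rpow_ne_top_of_nonneg (by norm_num) hμA) hb_ne with M hM
  calc eLpNorm (freqProj A f) (ENNReal.ofReal p) volume
      ≤ (M : ℝ≥0∞) ^ (1 - 2 / p) * eLpNorm (freqProj A f) 2 volume ^ (2 / p) :=
        eLpNorm_le_rpow_mul_eLpNorm_two_rpow hp
          (.of_forall fun x ↦ hM ▸ enorm_freqProj_le f hA x)
    _ = volume A ^ (1 / 2 * (1 - 2 / p)) * b ^ (1 - 2 / p + 2 / p) := by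
        rw [eLpNorm_freqProj_two f hA hμA, ← hb, hM, ENNReal.mul_rpow_of_nonneg _ _ (by linarith),
          ← ENNReal.rpow_mul, mul_assoc, ← ENNReal.rpow_add_of_nonneg _ _ (by linarith)
          (by positivity)]
    _ = volume A ^ (1 / 2 - 1 / p) * b := by
        rw [sub_add_cancel, ENNReal.rpow_one]
        congr 2
        ring

end FrequencyProjection

section FrequencyKernel

open scoped FourierTransform ENNReal

variable {E : Type*} [NormedAddCommGroup E] [InnerProductSpace ℝ E] {A : Set E}

/-- The character `ξ ↦ e^{-2πi⟨ξ, x⟩}` cut off to `A`: its inverse Fourier transform represents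
the evaluation of `freqProj A` at `x`. -/
def bandCharacter (A : Set E) (x : E) : E → ℂ :=
  A.indicator fun ξ ↦ Real.fourierChar (-inner ℝ ξ x)

lemma memLp_bandCharacter [MeasurableSpace E] [OpensMeasurableSpace E] {μ : Measure E}
    (hA : MeasurableSet A) (hμA : μ A ≠ ∞) (x : E) (p : ℝ≥0∞) :
    MemLp (bandCharacter A x) p μ := by
  have hmeas : StronglyMeasurable (bandCharacter A x) :=
    (show Continuous fun ξ ↦ (Real.fourierChar (-inner ℝ ξ x) : ℂ) from
      continuous_subtype_val.comp
        (Real.continuous_fourierChar.comp (by fun_prop))).stronglyMeasurable.indicator hA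
  refine (memLp_indicator_const p hA (1 : ℂ) (.inr hμA)).of_le hmeas.aestronglyMeasurable
    (.of_forall fun ξ ↦ ?_)
  by_cases hξ : ξ ∈ A
  · simp only [bandCharacter, Set.indicator_of_mem hξ, Circle.norm_coe, norm_one, le_refl]
  · simp [bandCharacter, hξ]

variable [FiniteDimensional ℝ E] [MeasurableSpace E] [BorelSpace E]

lemma fourierInv_bandCharacter (A : Set E) (x y : E) :
    𝓕⁻ (bandCharacter A x) y = 𝓕⁻ (bandCharacter A 0) (y - x) := by
  rw [Real.fourierInv_eq, Real.fourierInv_eq]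
  congr 1
  funext ξ
  by_cases hξ : ξ ∈ A
  · simp only [bandCharacter, Set.indicator_of_mem hξ, inner_zero_right, neg_zero,
      AddChar.map_zero_eq_one, Circle.coe_one, Circle.smul_def, smul_eq_mul, mul_one]
    rw [inner_sub_right, sub_eq_add_neg, AddChar.map_add_eq_mul, Circle.coe_mul]
  · simp [bandCharacter, hξ]

lemma freqProj_eq_inner (hA : MeasurableSet A) (hμA : volume A ≠ ∞) (f : L²(E)) (x : E) :
    freqProj A f x =
      inner ℂ (𝓕⁻ ((memLp_bandCharacter hA hμA x 2).toLp _) : L²(E)) f := by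
  rw [← Lp.inner_fourier_eq, FourierTransform.fourier_fourierInv_eq, L2.inner_def, freqProj,
    Real.fourierInv_eq]
  refine integral_congr_ae ?_
  filter_upwards [(memLp_bandCharacter hA hμA x 2).coeFn_toLp] with ξ hξ
  rw [hξ, RCLike.inner_apply]
  by_cases hmem : ξ ∈ A
  · simp only [bandCharacter, Set.indicator_of_mem hmem, Circle.smul_def, smul_eq_mul]
    rw [AddChar.map_neg_eq_inv, Circle.coe_inv_eq_conj, Complex.conj_conj, mul_comm]
  · simp [bandCharacter, hmem]

lemma freqProj_zero (hA : MeasurableSet A) (hμA : volume A ≠ ∞) (x : E) :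
    freqProj A 0 x = 0 := by
  rw [freqProj_eq_inner hA hμA, inner_zero_right]

lemma freqProj_eq_integral (hA : MeasurableSet A) (hμA : volume A ≠ ∞) {f : E → ℂ}
    (hf : MemLp f 2) (x : E) :
    freqProj A (hf.toLp f) x = ∫ y, inner ℂ (𝓕⁻ (bandCharacter A 0) (y - x)) (f y) := by
  have hintegrable := memLp_one_iff_integrable.1 (memLp_bandCharacter hA hμA x 1)
  rw [freqProj_eq_inner hA hμA, L2.inner_def]
  refine integral_congr_ae ?_
  filter_upwards [fourierInv_toLp_ae_eq hintegrable (memLp_bandCharacter hA hμA x 2),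
    hf.coeFn_toLp] with y hchar hy
  rw [hchar, hy, fourierInv_bandCharacter]

lemma freqProj_comp_add_right (hA : MeasurableSet A) (hμA : volume A ≠ ∞) {f : E → ℂ}
    (hf : MemLp f 2) (a : E) (hfa : MemLp (fun x ↦ f (x + a)) 2) :
    freqProj A (hfa.toLp _) 0 = freqProj A (hf.toLp f) a := by
  rw [freqProj_eq_integral hA hμA, freqProj_eq_integral hA hμA,
    ← integral_add_right_eq_self (fun y ↦ inner ℂ _ (f y)) a]
  simp only [sub_zero, add_sub_cancel_right]

end FrequencyKernel

section FrequencyTail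

open scoped FourierTransform ENNReal
open Metric (ball)

variable {E : Type*} [NormedAddCommGroup E] [InnerProductSpace ℝ E] [FiniteDimensional ℝ E]
  [MeasurableSpace E] [BorelSpace E] {f G : L²(E)} {a p : ℝ}

lemma eLpNorm_indicator_fourier_le (hfG : ∀ᵐ ξ, ‖ξ‖ ^ a * ‖(𝓕 f : L²(E)) ξ‖ ≤ ‖G ξ‖)
    (ha : 0 ≤ a) {A : Set E} {ρ : ℝ} (hρ : 0 < ρ) (hA : ∀ ξ ∈ A, ρ ≤ ‖ξ‖) :
    eLpNorm (A.indicator (𝓕 f : L²(E))) 2 volume ≤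
      ENNReal.ofReal (ρ ^ (-a)) * eLpNorm G 2 volume := by
  refine eLpNorm_le_mul_eLpNorm_of_ae_le_mul ?_ 2
  filter_upwards [hfG] with ξ hξ
  by_cases hmem : ξ ∈ A
  · rw [Set.indicator_of_mem hmem, Real.rpow_neg hρ.le, ← div_eq_inv_mul,
      le_div_iff₀' (Real.rpow_pos_of_pos hρ a)]
    refine le_trans ?_ hξ
    gcongr
    exact hA ξ hmem
  · rw [Set.indicator_of_notMem hmem, norm_zero]
    positivity

lemma eLpNorm_freqProj_annulus_le (hfG : ∀ᵐ ξ, ‖ξ‖ ^ a * ‖(𝓕 f : L²(E)) ξ‖ ≤ ‖G ξ‖)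
    (ha : 0 ≤ a) (hp : 2 < p) {ρ : ℝ} (hρ : 0 < ρ) :
    eLpNorm (freqProj (ball 0 (2 * ρ) \ ball 0 ρ) f) (ENNReal.ofReal p) volume ≤
      volume (ball (0 : E) 2) ^ (1 / 2 - 1 / p) *
        ENNReal.ofReal (ρ ^ (Module.finrank ℝ E * (1 / 2 - 1 / p) - a)) *
          eLpNorm G 2 volume := by
  set d := Module.finrank ℝ E
  have hs : 0 ≤ 1 / 2 - 1 / p := by
    rw [sub_nonneg]
    exact one_div_le_one_div_of_le two_pos hp.le
  have hvolume : volume (ball (0 : E) (2 * ρ) \ ball 0 ρ) ≤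
      ENNReal.ofReal (ρ ^ d) * volume (ball (0 : E) 2) := by
    rw [← Measure.addHaar_ball_mul_of_pos _ _ hρ, mul_comm ρ]
    exact measure_mono Set.sdiff_subset
  calc eLpNorm (freqProj (ball 0 (2 * ρ) \ ball 0 ρ) f) (ENNReal.ofReal p) volume
      ≤ (ENNReal.ofReal (ρ ^ d) * volume (ball (0 : E) 2)) ^ (1 / 2 - 1 / p) *
          (ENNReal.ofReal (ρ ^ (-a)) * eLpNorm G 2 volume) := by
        refine (eLpNorm_freqProj_le f (measurableSet_ball.diff measurableSet_ball)
          (measure_ne_top_of_subset Set.sdiff_subset measure_ball_lt_top.ne) hp).trans ?_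
        gcongr
        exact eLpNorm_indicator_fourier_le hfG ha hρ fun ξ hξ ↦ by simpa using hξ.2
    _ = volume (ball (0 : E) 2) ^ (1 / 2 - 1 / p) *
          (ENNReal.ofReal (ρ ^ (d * (1 / 2 - 1 / p))) * ENNReal.ofReal (ρ ^ (-a))) *
            eLpNorm G 2 volume := by
        rw [ENNReal.mul_rpow_of_nonneg _ _ hs, ENNReal.ofReal_rpow_of_pos (by positivity),
          ← Real.rpow_natCast, ← Real.rpow_mul hρ.le]
        ring
    _ = _ := by rw [← ENNReal.ofReal_mul (by positivity), ← Real.rpow_add hρ, ← sub_eq_add_neg]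

lemma tendsto_eLpNorm_freqProj_ball_sub (hfG : ∀ᵐ ξ, ‖ξ‖ ^ a * ‖(𝓕 f : L²(E)) ξ‖ ≤ ‖G ξ‖)
    (ha : 0 < a) {r : ℕ → ℝ} (hr : ∀ k, 0 < r k) (hlim : Tendsto r atTop atTop) :
    Tendsto (fun k ↦ eLpNorm (freqProj (ball 0 (r k)) f - ⇑f) 2 volume) atTop (𝓝 0) := by
  have hbound (k : ℕ) : eLpNorm (freqProj (ball 0 (r k)) f - ⇑f) 2 volume ≤
      ENNReal.ofReal (r k ^ (-a)) * eLpNorm G 2 volume := by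
    rw [eLpNorm_sub_comm, eLpNorm_sub_freqProj_two f measurableSet_ball measure_ball_lt_top.ne]
    exact eLpNorm_indicator_fourier_le hfG ha.le (hr k) fun ξ hξ ↦ by simpa using hξ
  refine tendsto_of_tendsto_of_tendsto_of_le_of_le tendsto_const_nhds ?_ (fun _ ↦ zero_le) hbound
  simpa using ENNReal.Tendsto.mul_const
    (ENNReal.tendsto_ofReal ((tendsto_rpow_neg_atTop ha).comp hlim)) (.inr (Lp.eLpNorm_ne_top G))

lemma eLpNorm_sub_freqProj_ball_le_tsum
    (hfG : ∀ᵐ ξ, ‖ξ‖ ^ a * ‖(𝓕 f : L²(E)) ξ‖ ≤ ‖G ξ‖) (ha : 0 < a) (hp : 1 ≤ p) {R : ℝ}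
    (hR : 0 < R) :
    eLpNorm (⇑f - freqProj (ball 0 R) f) (ENNReal.ofReal p) volume ≤
      ∑' k : ℕ, eLpNorm (freqProj (ball 0 (2 * (2 ^ k * R)) \ ball 0 (2 ^ k * R)) f)
        (ENNReal.ofReal p) volume := by
  let r (k : ℕ) : ℝ := 2 ^ k * R
  have hr (k : ℕ) : 0 < r k := by positivity
  have hincrement (k : ℕ) : freqProj (ball 0 (r (k + 1))) f - freqProj (ball 0 (r k)) f =
      freqProj (ball 0 (2 * r k) \ ball 0 (r k)) f := by
    have hsucc : r (k + 1) = 2 * r k := by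
      simp only [r]
      ring
    have hsubset : ball (0 : E) (r k) ⊆ ball 0 (2 * r k) :=
      Metric.ball_subset_ball (by linarith [hr k])
    rw [hsucc, sub_eq_iff_eq_add', ← freqProj_union f measurableSet_ball
      measure_ball_lt_top.ne (measurableSet_ball.diff measurableSet_ball)
      (measure_ne_top_of_subset Set.sdiff_subset measure_ball_lt_top.ne)
      Set.disjoint_sdiff_right, Set.union_sdiff_cancel hsubset]
  have hmeas (k : ℕ) : AEStronglyMeasurable (freqProj (ball 0 (r k)) f) volume :=
    (continuous_freqProj f measurableSet_ball measure_ball_lt_top.ne).aestronglyMeasurable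
  have hlim : TendstoInMeasure volume (fun k ↦ freqProj (ball 0 (r k)) f) atTop f :=
    tendstoInMeasure_of_tendsto_eLpNorm two_ne_zero hmeas (Lp.aestronglyMeasurable f)
      (tendsto_eLpNorm_freqProj_ball_sub hfG ha hr
        ((tendsto_pow_atTop_atTop_of_one_lt one_lt_two).atTop_mul_const hR))
  have hsum := eLpNorm_sub_le_tsum (p := ENNReal.ofReal p) (by simpa using hp) hmeas hlim
  simp only [hincrement] at hsum
  simpa only [r, pow_zero, one_mul] using hsum

theorem exists_eLpNorm_sub_freqProj_ball_le (hp : 2 < p)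
    (ha : Module.finrank ℝ E * (1 / 2 - 1 / p) < a) :
    ∃ C : ℝ≥0∞, C ≠ ∞ ∧ ∀ f G : L²(E), (∀ᵐ ξ, ‖ξ‖ ^ a * ‖(𝓕 f : L²(E)) ξ‖ ≤ ‖G ξ‖) →
      ∀ R, 0 < R → eLpNorm (⇑f - freqProj (ball 0 R) f) (ENNReal.ofReal p) volume ≤
        C * ENNReal.ofReal (R ^ (Module.finrank ℝ E * (1 / 2 - 1 / p) - a)) *
          eLpNorm G 2 volume := by
  set d := Module.finrank ℝ E
  have hs : 0 < 1 / 2 - 1 / p := by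
    rw [sub_pos]
    exact one_div_lt_one_div_of_lt two_pos hp
  have ha0 : 0 < a := ha.trans_le' (by positivity)
  set b : ℝ := d * (1 / 2 - 1 / p) - a
  set q : ℝ≥0∞ := ENNReal.ofReal (2 ^ b) with hq
  have hq1 : q < 1 := by
    rw [hq, ENNReal.ofReal_lt_one]
    exact Real.rpow_lt_one_of_one_lt_of_neg one_lt_two (sub_neg.2 ha)
  set ω := volume (ball (0 : E) 2) ^ (1 / 2 - 1 / p)
  have hω : ω ≠ ∞ := ENNReal.rpow_ne_top_of_nonneg hs.le measure_ball_lt_top.ne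
  refine ⟨ω * (1 - q)⁻¹, ENNReal.mul_ne_top hω
    (ENNReal.inv_ne_top.2 (tsub_pos_of_lt hq1).ne'), fun f G hfG R hR ↦ ?_⟩
  have hdyadic (k : ℕ) : ENNReal.ofReal ((2 ^ k * R) ^ b) = ENNReal.ofReal (R ^ b) * q ^ k := by
    rw [Real.mul_rpow (by positivity) hR.le, ENNReal.ofReal_mul (by positivity), mul_comm, hq,
      ← ENNReal.ofReal_pow (by positivity), ← Real.rpow_natCast, ← Real.rpow_natCast,
      ← Real.rpow_mul two_pos.le, ← Real.rpow_mul two_pos.le, mul_comm b]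
  calc eLpNorm (⇑f - freqProj (ball 0 R) f) (ENNReal.ofReal p) volume
      ≤ ∑' k, ω * ENNReal.ofReal (R ^ b) * eLpNorm G 2 volume * q ^ k := by
        refine (eLpNorm_sub_freqProj_ball_le_tsum hfG ha0 (by linarith) hR).trans
          (ENNReal.tsum_le_tsum fun k ↦ ?_)
        refine (eLpNorm_freqProj_annulus_le hfG ha0.le hp (by positivity)).trans_eq ?_
        rw [hdyadic]
        ring
    _ = ω * (1 - q)⁻¹ * ENNReal.ofReal (R ^ b) * eLpNorm G 2 volume := by
        rw [ENNReal.tsum_mul_left, ENNReal.tsum_geometric]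
        ring

end FrequencyTail

section WeakConvergence

variable (𝕜 : Type*) {H ι : Type*} [RCLike 𝕜] [NormedAddCommGroup H] [InnerProductSpace 𝕜 H]

/-- Weak convergence of a sequence in an inner product space, tested against vectors rather than
functionals. -/
def TendstoWeakly (x : ℕ → H) (a : H) : Prop :=
  ∀ y, Tendsto (fun n ↦ inner 𝕜 y (x n)) atTop (𝓝 (inner 𝕜 y a))

variable {𝕜}

lemma TendstoWeakly.sub_limit {x : ℕ → H} {a : H} (h : TendstoWeakly 𝕜 x a) :
    TendstoWeakly 𝕜 (fun n ↦ x n - a) 0 := fun y ↦ by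
  simpa only [inner_sub_right, inner_zero_right, sub_self] using (h y).sub_const (inner 𝕜 y a)

lemma TendstoWeakly.norm_sq_sub_norm_sub_sq {x : ℕ → H} {a : H} (h : TendstoWeakly 𝕜 x a) :
    Tendsto (fun n ↦ ‖x n‖ ^ 2 - ‖x n - a‖ ^ 2) atTop (𝓝 (‖a‖ ^ 2)) := by
  have hexpand (n : ℕ) : ‖x n‖ ^ 2 - ‖x n - a‖ ^ 2 =
      2 * RCLike.re (inner 𝕜 a (x n)) - ‖a‖ ^ 2 := by
    rw [@norm_sub_sq 𝕜, inner_re_symm]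
    ring
  have hlim := (((RCLike.continuous_re.tendsto _).comp (h a)).const_mul 2).sub_const (‖a‖ ^ 2)
  simp only [Function.comp_def, inner_self_eq_norm_sq, two_mul, add_sub_cancel_right] at hlim
  simpa only [hexpand, two_mul] using hlim

variable [CompleteSpace H] [TopologicalSpace.SeparableSpace H]

lemma exists_subseq_tendstoWeakly {x : ℕ → H} {M : ℝ} (hx : ∀ n, ‖x n‖ ≤ M) :
    ∃ (ψ : ℕ → ℕ) (a : H), StrictMono ψ ∧ TendstoWeakly 𝕜 (x ∘ ψ) a := by
  obtain ⟨Φ, -, ψ, hψ, hlim⟩ := WeakDual.isSeqCompact_closedBall 𝕜 H 0 M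
    (x := fun n ↦ StrongDual.toWeakDual (InnerProductSpace.toDual 𝕜 H (x n)))
    fun n ↦ mem_closedBall_zero_iff.2 (by simpa using hx n)
  refine ⟨ψ, (InnerProductSpace.toDual 𝕜 H).symm (WeakDual.toStrongDual Φ), hψ, fun y ↦ ?_⟩
  have heval := ((WeakDual.eval_continuous y).tendsto Φ).comp hlim
  have hconj := (RCLike.continuous_conj.tendsto _).comp heval
  rw [← inner_conj_symm, InnerProductSpace.toDual_symm_apply]
  refine hconj.congr fun n ↦ ?_
  exact inner_conj_symm _ _

lemma exists_subseq_forall_tendstoWeakly [Finite ι] {x : ι → ℕ → H} {M : ℝ}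
    (hx : ∀ i n, ‖x i n‖ ≤ M) :
    ∃ (ψ : ℕ → ℕ) (a : ι → H), StrictMono ψ ∧ ∀ i, TendstoWeakly 𝕜 (x i ∘ ψ) (a i) := by
  classical
  have := Fintype.ofFinite ι
  have hbound (n : ℕ) : ‖WithLp.toLp 2 fun i ↦ x i n‖ ≤ √(Fintype.card ι * M ^ 2) := by
    rw [PiLp.norm_eq_of_L2]
    refine Real.sqrt_le_sqrt ((Finset.sum_le_card_nsmul _ _ (M ^ 2) fun i _ ↦ ?_).trans_eq ?_)
    · exact pow_le_pow_left₀ (norm_nonneg _) (hx i n) 2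
    · rw [Finset.card_univ, nsmul_eq_mul]
  obtain ⟨ψ, a, hψ, ha⟩ := exists_subseq_tendstoWeakly (𝕜 := 𝕜) hbound
  refine ⟨ψ, a, hψ, fun i y ↦ ?_⟩
  have hcoordinate (b : PiLp 2 fun _ : ι ↦ H) :
      inner 𝕜 (WithLp.toLp 2 (Pi.single i y)) b = inner 𝕜 y (b i) := by
    rw [PiLp.inner_apply, Finset.sum_eq_single_of_mem i (Finset.mem_univ i)]
    · simp
    · intro j _ hj
      simp [hj]
  have hlim := ha (WithLp.toLp 2 (Pi.single i y))
  simp only [hcoordinate] at hlim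
  exact hlim

end WeakConvergence

section WeakDivergenceOperations

open scoped ContDiff ComplexConjugate

variable {ι E : Type*} [Fintype ι] [NormedAddCommGroup E] [InnerProductSpace ℝ E]

lemma continuous_fderiv_apply_of_contDiff {φ : E → ℂ} (hφ : ContDiff ℝ ∞ φ) (m : E) :
    Continuous fun x ↦ fderiv ℝ φ x m :=
  (hφ.continuous_fderiv (by simp)).clm_apply continuous_const

variable [FiniteDimensional ℝ E] [MeasurableSpace E] [BorelSpace E]
  {m : ι → E} {v v' : ι → E → ℂ} {w w' : E → ℂ}

lemma integrable_mul_of_hasCompactSupport {f g : E → ℂ} (hf : LocallyIntegrable f)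
    (hg : Continuous g) (hg' : HasCompactSupport g) : Integrable fun x ↦ f x * g x :=
  hf.integrable_smul_right_of_hasCompactSupport hg hg'

lemma integrable_mul_fderiv_of_hasCompactSupport {f φ : E → ℂ} (hf : LocallyIntegrable f)
    (hφ : ContDiff ℝ ∞ φ) (hφ' : HasCompactSupport φ) (m : E) :
    Integrable fun x ↦ f x * fderiv ℝ φ x m :=
  integrable_mul_of_hasCompactSupport hf (continuous_fderiv_apply_of_contDiff hφ m)
    (hφ'.fderiv_apply ℝ m)

lemma HasWeakDiv.sub (h : HasWeakDiv m v w) (h' : HasWeakDiv m v' w')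
    (hv : ∀ i, LocallyIntegrable (v i)) (hv' : ∀ i, LocallyIntegrable (v' i))
    (hw : LocallyIntegrable w) (hw' : LocallyIntegrable w') :
    HasWeakDiv m (fun i ↦ v i - v' i) (w - w') := fun φ hφ hφ' ↦ by
  have hvφ (i : ι) := integrable_mul_fderiv_of_hasCompactSupport (hv i) hφ hφ' (m i)
  have hv'φ (i : ι) := integrable_mul_fderiv_of_hasCompactSupport (hv' i) hφ hφ' (m i)
  have hwφ := integrable_mul_of_hasCompactSupport hw hφ.continuous hφ'
  have hw'φ := integrable_mul_of_hasCompactSupport hw' hφ.continuous hφ'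
  simp only [Pi.sub_apply, sub_mul, integral_sub (hvφ _) (hv'φ _), integral_sub hwφ hw'φ,
    Finset.sum_sub_distrib, h φ hφ hφ', h' φ hφ hφ']
  ring

lemma HasWeakDiv.const_smul (h : HasWeakDiv m v w) (c : ℂ) :
    HasWeakDiv m (fun i ↦ c • v i) (c • w) := fun φ hφ hφ' ↦ by
  simp only [Pi.smul_apply, smul_eq_mul, mul_assoc, integral_const_mul, ← Finset.mul_sum,
    h φ hφ hφ', mul_neg]

lemma HasWeakDiv.congr_ae (h : HasWeakDiv m v w) (hv : ∀ i, v i =ᵐ[volume] v' i)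
    (hw : w =ᵐ[volume] w') : HasWeakDiv m v' w' := fun φ hφ hφ' ↦ by
  have hvφ (i : ι) : ∫ x, v' i x * fderiv ℝ φ x (m i) = ∫ x, v i x * fderiv ℝ φ x (m i) :=
    integral_congr_ae ((hv i).symm.mul .rfl)
  have hwφ : ∫ x, w' x * φ x = ∫ x, w x * φ x := integral_congr_ae (hw.symm.mul .rfl)
  simp only [hvφ, hwφ, h φ hφ hφ']

lemma HasWeakDiv.comp_add_right (h : HasWeakDiv m v w) (a : E) :
    HasWeakDiv m (fun i x ↦ v i (x + a)) (fun x ↦ w (x + a)) := fun φ hφ hφ' ↦ by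
  have hshift := h (fun x ↦ φ (x + -a)) (hφ.comp (contDiff_id.add contDiff_const))
    (hφ'.comp_homeomorph (Homeomorph.addRight (-a)))
  rw [← integral_add_right_eq_self _ a] at hshift
  simp only [fderiv_comp_add_right,
    ← integral_add_right_eq_self (fun x ↦ v _ x * fderiv ℝ φ (x + -a) _) a,
    add_neg_cancel_right] at hshift
  exact hshift

lemma HasWeakDiv.comp_smul (h : HasWeakDiv m v w) {r : ℝ} (hr : r ≠ 0) :
    HasWeakDiv m (fun i x ↦ v i (r • x)) ((r : ℂ) • fun x ↦ w (r • x)) := fun φ hφ hφ' ↦ by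
  let ψ (x : E) : ℂ := φ (r⁻¹ • x)
  have hψ : ContDiff ℝ ∞ ψ := hφ.comp (contDiff_const_smul r⁻¹)
  have hφψ (x : E) : φ x = ψ (r • x) := by simp only [ψ, inv_smul_smul₀ hr]
  have hderiv (x : E) (m : E) : fderiv ℝ φ x m = r * fderiv ℝ ψ (r • x) m := by
    rw [funext hφψ, fderiv_comp_smul]
    simp
  have hscale (f : E → ℂ) := Measure.integral_comp_smul (volume : Measure E) f r
  have hleft (i : ι) : ∫ x, v i (r • x) * fderiv ℝ φ x (m i) =
      r * (|(r ^ Module.finrank ℝ E)⁻¹| • ∫ y, v i y * fderiv ℝ ψ y (m i)) := by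
    simp only [hderiv, mul_left_comm _ (r : ℂ), integral_const_mul,
      hscale fun y ↦ v i y * fderiv ℝ ψ y (m i)]
  have hright : ∫ x, ((r : ℂ) • fun x ↦ w (r • x)) x * φ x =
      r * (|(r ^ Module.finrank ℝ E)⁻¹| • ∫ y, w y * ψ y) := by
    simp only [hφψ, Pi.smul_apply, smul_eq_mul, mul_assoc, integral_const_mul,
      hscale fun y ↦ w y * ψ y]
  simp only [hleft, hright, ← Finset.mul_sum, ← Finset.smul_sum,
    h ψ hψ (hφ'.comp_smul (inv_ne_zero hr)), smul_neg, mul_neg]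

lemma hasWeakDiv_of_contDiff (hv : ∀ i, ContDiff ℝ ∞ (v i)) :
    HasWeakDiv m v fun x ↦ ∑ i, fderiv ℝ (v i) x (m i) := fun φ hφ hφ' ↦ by
  have hderiv (i : ι) : Integrable fun x ↦ fderiv ℝ (v i) x (m i) * φ x :=
    integrable_mul_of_hasCompactSupport
      (continuous_fderiv_apply_of_contDiff (hv i) _).locallyIntegrable hφ.continuous hφ'
  simp only [Finset.sum_mul]
  rw [integral_finsetSum _ fun i _ ↦ hderiv i, ← Finset.sum_neg_distrib]
  refine Finset.sum_congr rfl fun i _ ↦ ?_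
  exact integral_mul_fderiv_eq_neg_fderiv_mul_of_integrable (hderiv i)
    (integrable_mul_fderiv_of_hasCompactSupport (hv i).continuous.locallyIntegrable hφ hφ' (m i))
    (integrable_mul_of_hasCompactSupport (hv i).continuous.locallyIntegrable hφ.continuous hφ')
    (fun x _ ↦ (hv i).differentiable (by simp) x) (fun x _ ↦ hφ.differentiable (by simp) x)

lemma TendstoWeakly.tendsto_integral_mul {f : ℕ → L²(E)} {g : L²(E)} (h : TendstoWeakly ℂ f g)
    {k : E → ℂ} (hk : MemLp k 2) :
    Tendsto (fun n ↦ ∫ x, f n x * k x) atTop (𝓝 (∫ x, g x * k x)) := by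
  have hconj : MemLp (fun x ↦ conj (k x)) 2 := hk.star
  have hinner (f : L²(E)) : inner ℂ (hconj.toLp _) f = ∫ x, f x * k x := by
    rw [L2.inner_def]
    refine integral_congr_ae ?_
    filter_upwards [hconj.coeFn_toLp] with x hx
    rw [hx, RCLike.inner_apply, Complex.conj_conj]
  simpa only [hinner] using h (hconj.toLp _)

lemma HasWeakDiv.of_tendstoWeakly {v : ι → ℕ → L²(E)} {w : ℕ → L²(E)} {a : ι → L²(E)} {b : L²(E)}
    (h : ∀ n, HasWeakDiv m (fun i ↦ v i n) (w n)) (hv : ∀ i, TendstoWeakly ℂ (v i) (a i))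
    (hw : TendstoWeakly ℂ w b) : HasWeakDiv m (fun i ↦ a i) b := fun φ hφ hφ' ↦ by
  refine tendsto_nhds_unique (tendsto_finsetSum _ fun i _ ↦ (hv i).tendsto_integral_mul
    ((continuous_fderiv_apply_of_contDiff hφ (m i)).memLp_of_hasCompactSupport
      (hφ'.fderiv_apply ℝ (m i)))) ?_
  simp only [h _ φ hφ hφ']
  exact (hw.tendsto_integral_mul (hφ.continuous.memLp_of_hasCompactSupport hφ')).neg

end WeakDivergenceOperations

section LocalVanishing

open scoped ENNReal

variable {α F : Type*} [MeasurableSpace α] {μ : Measure α} [NormedAddCommGroup F] {p : ℝ}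

lemma eLpNorm_rpow_eq_lintegral {f : α → F} (hp : 0 < p) :
    eLpNorm f (ENNReal.ofReal p) μ ^ p = ∫⁻ x, ‖f x‖ₑ ^ p ∂μ := by
  rw [eLpNorm_eq_lintegral_rpow_enorm_toReal (by simpa using hp) ENNReal.ofReal_ne_top,
    ENNReal.toReal_ofReal hp.le, one_div, ENNReal.rpow_inv_rpow hp.ne']

lemma eLpNorm_rpow_piecewise_le {f g : α → F} (hf : AEStronglyMeasurable f μ) (hp : 0 < p)
    (s : Set α) [DecidablePred (· ∈ s)] :
    eLpNorm (s.piecewise f g) (ENNReal.ofReal p) μ ^ p ≤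
      eLpNorm f (ENNReal.ofReal p) μ ^ p + eLpNorm g (ENNReal.ofReal p) μ ^ p := by
  simp only [eLpNorm_rpow_eq_lintegral hp]
  rw [← lintegral_add_left' (hf.enorm.pow_const p)]
  refine lintegral_mono fun x ↦ ?_
  by_cases hx : x ∈ s
  · simp only [Set.piecewise_eq_of_mem _ _ _ hx, le_self_add]
  · simp only [Set.piecewise_eq_of_notMem _ _ _ hx, le_add_self]

lemma eLpNorm_add_le_of_piecewise {f g : α → F} (hf : AEStronglyMeasurable f μ)
    (hg : AEStronglyMeasurable g μ) (hp : 1 ≤ p) {s : Set α} (hs : MeasurableSet s) :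
    eLpNorm (f + g) (ENNReal.ofReal p) μ ≤
      (eLpNorm f (ENNReal.ofReal p) μ ^ p + eLpNorm g (ENNReal.ofReal p) μ ^ p) ^ (1 / p) +
        (eLpNorm g (ENNReal.ofReal p) (μ.restrict s) +
          eLpNorm (sᶜ.indicator f) (ENNReal.ofReal p) μ) := by
  classical
  have hp1 : 1 ≤ ENNReal.ofReal p := by simpa using hp
  have hp0 : 0 < p := by linarith
  have hdecomposition : f + g = s.piecewise f g + (s.indicator g + sᶜ.indicator f) := by
    funext x
    by_cases hx : x ∈ s <;> simp [hx, add_comm]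
  have hpiece : AEStronglyMeasurable (s.piecewise f g) μ :=
    .piecewise hs hf.restrict hg.restrict
  rw [hdecomposition]
  refine (eLpNorm_add_le hpiece ((hg.indicator hs).add (hf.indicator hs.compl)) hp1).trans
    (add_le_add ?_ ((eLpNorm_add_le (hg.indicator hs) (hf.indicator hs.compl) hp1).trans_eq ?_))
  · rw [one_div, ENNReal.le_rpow_inv_iff hp0]
    exact eLpNorm_rpow_piecewise_le hf hp0 s
  · rw [eLpNorm_indicator_eq_eLpNorm_restrict hs]

-- Half of the Brezis–Lieb lemma, with local `L^p` convergence in place of a.e. convergence.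
theorem rpow_le_eLpNorm_rpow_add_of_tendsto {f : α → F} {g : ℕ → α → F} {a b : ℝ≥0∞}
    {c : ℕ → ℝ≥0∞} (hp : 1 ≤ p) (hf : MemLp f (ENNReal.ofReal p) μ)
    (hg : ∀ n, AEStronglyMeasurable (g n) μ)
    (hlocal : ∀ s, μ s < ∞ →
      Tendsto (fun n ↦ eLpNorm (g n) (ENNReal.ofReal p) (μ.restrict s)) atTop (𝓝 0))
    (hfg : Tendsto (fun n ↦ eLpNorm (f + g n) (ENNReal.ofReal p) μ) atTop (𝓝 a))
    (hgc : ∀ n, eLpNorm (g n) (ENNReal.ofReal p) μ ≤ c n) (hc : Tendsto c atTop (𝓝 b)) :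
    a ^ p ≤ eLpNorm f (ENNReal.ofReal p) μ ^ p + b ^ p := by
  have hp0 : 0 < p := by linarith
  rw [← ENNReal.le_rpow_inv_iff hp0, ← one_div]
  refine ENNReal.le_of_forall_pos_le_add fun ε hε _ ↦ ?_
  obtain ⟨s, hs, hμs, hsε⟩ := hf.exists_eLpNorm_indicator_compl_lt ENNReal.ofReal_ne_top
    (ENNReal.coe_ne_zero.2 hε.ne')
  have hmain := ((ENNReal.continuous_rpow_const (y := 1 / p)).tendsto _).comp
    ((((ENNReal.continuous_rpow_const (y := p)).tendsto _).comp hc).const_add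
      (eLpNorm f (ENNReal.ofReal p) μ ^ p))
  have hlim := hmain.add ((hlocal s hμs).add_const (ε : ℝ≥0∞))
  rw [zero_add] at hlim
  refine le_of_tendsto_of_tendsto' hfg hlim fun n ↦
    (eLpNorm_add_le_of_piecewise hf.1 (hg n) hp hs).trans ?_
  simp only [Function.comp_apply]
  gcongr
  exact hgc n

lemma tendsto_eLpNorm_of_enorm_le_of_tendsto_zero {g : ℕ → α → F} [IsFiniteMeasure μ] {B : ℝ≥0∞}
    (hp : 0 < p) (hg : ∀ n, AEStronglyMeasurable (g n) μ) (hB : B ≠ ∞) (hgB : ∀ n x, ‖g n x‖ₑ ≤ B)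
    (hlim : ∀ x, Tendsto (fun n ↦ g n x) atTop (𝓝 0)) :
    Tendsto (fun n ↦ eLpNorm (g n) (ENNReal.ofReal p) μ) atTop (𝓝 0) := by
  have hlintegral : Tendsto (fun n ↦ ∫⁻ x, ‖g n x‖ₑ ^ p ∂μ) atTop (𝓝 (∫⁻ _, 0 ∂μ)) := by
    refine tendsto_lintegral_of_dominated_convergence' (fun _ ↦ B ^ p)
      (fun n ↦ (hg n).enorm.pow_const p)
      (fun n ↦ .of_forall fun x ↦ ENNReal.rpow_le_rpow (hgB n x) hp.le) ?_
      (.of_forall fun x ↦ ?_)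
    · rw [lintegral_const]
      exact ENNReal.mul_ne_top (ENNReal.rpow_ne_top_of_nonneg hp.le hB) (measure_ne_top μ _)
    · have h := ((ENNReal.continuous_rpow_const (y := p)).tendsto _).comp (hlim x).enorm
      simpa only [Function.comp_def, enorm_zero, ENNReal.zero_rpow_of_pos hp] using h
  have hroot := ((ENNReal.continuous_rpow_const (y := p⁻¹)).tendsto _).comp hlintegral
  simpa only [Function.comp_def, ← eLpNorm_rpow_eq_lintegral hp, ENNReal.rpow_rpow_inv hp.ne',
    lintegral_zero, ENNReal.zero_rpow_of_pos (inv_pos.2 hp)] using hroot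

end LocalVanishing

section Dilation

open scoped ENNReal

variable {E F : Type*} [NormedAddCommGroup E] [NormedSpace ℝ E] [FiniteDimensional ℝ E]
  [MeasurableSpace E] [BorelSpace E] [NormedAddCommGroup F] {μ : Measure E} [μ.IsAddHaarMeasure]
  {f : E → F} {p : ℝ≥0∞} {r : ℝ}

lemma measurePreserving_smul_addHaar (hr : r ≠ 0) :
    MeasurePreserving (fun x : E ↦ r • x) μ
      (ENNReal.ofReal |(r ^ Module.finrank ℝ E)⁻¹| • μ) :=
  ⟨measurable_const_smul r, Measure.map_addHaar_smul μ hr⟩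

lemma eLpNorm_comp_smul (hf : AEStronglyMeasurable f μ) (hr : r ≠ 0) (hp : p ≠ ∞) :
    eLpNorm (fun x ↦ f (r • x)) p μ =
      ENNReal.ofReal |(r ^ Module.finrank ℝ E)⁻¹| ^ (1 / p).toReal * eLpNorm f p μ := by
  rw [← smul_eq_mul, ← eLpNorm_smul_measure_of_ne_top hp]
  exact eLpNorm_comp_measurePreserving (hf.smul_measure _) (measurePreserving_smul_addHaar hr)

lemma memLp_comp_smul (hf : MemLp f p μ) (hr : r ≠ 0) : MemLp (fun x ↦ f (r • x)) p μ :=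
  (hf.smul_measure ENNReal.ofReal_ne_top).comp_measurePreserving
    (measurePreserving_smul_addHaar hr)

end Dilation

section SobolevSpace

open scoped ContDiff ENNReal

variable {N : ℕ}

lemma TestFun.pderivC {φ : Esp N → ℂ} (hφ : TestFun φ) (i : Fin N) : TestFun (pderivC i φ) :=
  ⟨(hφ.1.fderiv_right (m := ∞) (by simp)).clm_apply contDiff_const, hφ.2.fderiv_apply ℝ _⟩

lemma isWeakPDeriv_iff_hasWeakDiv {u v : Esp N → ℂ} {i : Fin N} :
    IsWeakPDeriv u i v ↔
      HasWeakDiv (fun _ : Unit ↦ EuclideanSpace.single i (1 : ℝ)) (fun _ ↦ u) v := by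
  simp only [IsWeakPDeriv, HasWeakDiv, TestFun, and_imp, Finset.univ_unique, Finset.sum_const,
    Finset.card_singleton, one_smul, pderivC]

lemma isWeakLap_iff_hasWeakDiv {u w : Esp N → ℂ} {g : Fin N → Esp N → ℂ}
    (hu : LocallyIntegrable u) (hg : ∀ i, IsWeakPDeriv u i (g i)) :
    IsWeakLap u w ↔ HasWeakDiv (fun i ↦ EuclideanSpace.single i (1 : ℝ)) g w := by
  have hparts (φ : Esp N → ℂ) (hφ : TestFun φ) : ∫ x, u x * lapC φ x =
      -∑ i, ∫ x, g i x * fderiv ℝ φ x (EuclideanSpace.single i (1 : ℝ)) := by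
    simp only [lapC, Finset.mul_sum]
    rw [integral_finsetSum _ fun i _ ↦ integrable_mul_of_hasCompactSupport hu
      ((hφ.pderivC i).pderivC i).1.continuous ((hφ.pderivC i).pderivC i).2,
      ← Finset.sum_neg_distrib]
    exact Finset.sum_congr rfl fun i _ ↦ hg i _ (hφ.pderivC i)
  refine forall_congr' fun φ ↦ ⟨fun h hφ hφ' ↦ ?_, fun h hφ ↦ ?_⟩
  · rw [← h ⟨hφ, hφ'⟩, hparts φ ⟨hφ, hφ'⟩, neg_neg]
  · rw [hparts φ hφ, h hφ.1 hφ.2, neg_neg]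

namespace H2

/-- The element of `H²(ℝ^N)` with given value, weak gradient and weak divergence of the gradient. -/
def ofWeakDiv {u : Esp N → ℂ} {g : Fin N → Esp N → ℂ} {w : Esp N → ℂ} (hu : MemLp u 2)
    (hg : ∀ i, MemLp (g i) 2) (hw : MemLp w 2)
    (hug : ∀ i, HasWeakDiv (fun _ : Unit ↦ EuclideanSpace.single i (1 : ℝ)) (fun _ ↦ u) (g i))
    (hgw : HasWeakDiv (fun i ↦ EuclideanSpace.single i (1 : ℝ)) g w) : H2 N where
  u := u
  grad := g
  lapl := w
  u_mem := hu
  grad_mem := hg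
  lapl_mem := hw
  grad_spec i := isWeakPDeriv_iff_hasWeakDiv.2 (hug i)
  lapl_spec := (isWeakLap_iff_hasWeakDiv (hu.locallyIntegrable one_le_two)
    fun i ↦ isWeakPDeriv_iff_hasWeakDiv.2 (hug i)).2 hgw

lemma hasWeakDiv_grad (U : H2 N) (i : Fin N) :
    HasWeakDiv (fun _ : Unit ↦ EuclideanSpace.single i (1 : ℝ)) (fun _ ↦ U.u) (U.grad i) :=
  isWeakPDeriv_iff_hasWeakDiv.1 (U.grad_spec i)

lemma hasWeakDiv_lapl (U : H2 N) :
    HasWeakDiv (fun i ↦ EuclideanSpace.single i (1 : ℝ)) U.grad U.lapl :=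
  (isWeakLap_iff_hasWeakDiv (U.u_mem.locallyIntegrable one_le_two) U.grad_spec).1 U.lapl_spec

instance : Sub (H2 N) where
  sub U V := ofWeakDiv (U.u_mem.sub V.u_mem) (fun i ↦ (U.grad_mem i).sub (V.grad_mem i))
    (U.lapl_mem.sub V.lapl_mem)
    (fun i ↦ (U.hasWeakDiv_grad i).sub (V.hasWeakDiv_grad i)
      (fun _ ↦ U.u_mem.locallyIntegrable one_le_two) (fun _ ↦ V.u_mem.locallyIntegrable one_le_two)
      ((U.grad_mem i).locallyIntegrable one_le_two) ((V.grad_mem i).locallyIntegrable one_le_two))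
    (U.hasWeakDiv_lapl.sub V.hasWeakDiv_lapl
      (fun i ↦ (U.grad_mem i).locallyIntegrable one_le_two)
      (fun i ↦ (V.grad_mem i).locallyIntegrable one_le_two)
      (U.lapl_mem.locallyIntegrable one_le_two) (V.lapl_mem.locallyIntegrable one_le_two))

instance : SMul ℂ (H2 N) where
  smul c U := ofWeakDiv (U.u_mem.const_smul c) (fun i ↦ (U.grad_mem i).const_smul c)
    (U.lapl_mem.const_smul c) (fun i ↦ (U.hasWeakDiv_grad i).const_smul c)
    (U.hasWeakDiv_lapl.const_smul c)

@[simp] lemma sub_u (U V : H2 N) : (U - V).u = U.u - V.u := rfl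

@[simp] lemma smul_u (c : ℂ) (U : H2 N) : (c • U).u = c • U.u := rfl

@[simp] lemma smul_lapl (c : ℂ) (U : H2 N) : (c • U).lapl = c • U.lapl := rfl

/-- The translate `u(· + a)` of `u ∈ H²(ℝ^N)`. -/
def translate (U : H2 N) (a : Esp N) : H2 N :=
  ofWeakDiv (U.u_mem.comp_measurePreserving (measurePreserving_add_right volume a))
    (fun i ↦ (U.grad_mem i).comp_measurePreserving (measurePreserving_add_right volume a))
    (U.lapl_mem.comp_measurePreserving (measurePreserving_add_right volume a))
    (fun i ↦ (U.hasWeakDiv_grad i).comp_add_right a) (U.hasWeakDiv_lapl.comp_add_right a)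

/-- The dilate `u(r ·)` of `u ∈ H²(ℝ^N)`. -/
def dilate (U : H2 N) {r : ℝ} (hr : r ≠ 0) : H2 N :=
  ofWeakDiv (memLp_comp_smul U.u_mem hr)
    (fun i ↦ (memLp_comp_smul (U.grad_mem i) hr).const_smul (r : ℂ))
    ((memLp_comp_smul U.lapl_mem hr).const_smul ((r : ℂ) * r))
    (fun i ↦ (U.hasWeakDiv_grad i).comp_smul hr)
    (mul_smul (r : ℂ) (r : ℂ) (fun x ↦ U.lapl (r • x)) ▸
      (U.hasWeakDiv_lapl.comp_smul hr).const_smul (r : ℂ))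

@[simp] lemma dilate_lapl (U : H2 N) {r : ℝ} (hr : r ≠ 0) :
    (U.dilate hr).lapl = ((r : ℂ) * r) • fun x ↦ U.lapl (r • x) := rfl

/-- A test function as an element of `H²(ℝ^N)`. -/
def ofTestFun {φ : Esp N → ℂ} (hφ : TestFun φ) : H2 N :=
  ofWeakDiv (hφ.1.continuous.memLp_of_hasCompactSupport hφ.2)
    (fun i ↦ (hφ.pderivC i).1.continuous.memLp_of_hasCompactSupport (hφ.pderivC i).2)
    (memLp_finsetSum _ fun i _ ↦ ((hφ.pderivC i).pderivC i).1.continuous.memLp_of_hasCompactSupport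
      ((hφ.pderivC i).pderivC i).2)
    (fun i ↦ by
      have h := hasWeakDiv_of_contDiff (m := fun _ : Unit ↦ EuclideanSpace.single i (1 : ℝ))
        (v := fun _ ↦ φ) fun _ ↦ hφ.1
      simp only [Finset.univ_unique, Finset.sum_singleton] at h
      exact h)
    (hasWeakDiv_of_contDiff fun i ↦ (hφ.pderivC i).1)

lemma exists_nontriv (N : ℕ) : ∃ U : H2 N, U.Nontriv := by
  have hφ : TestFun fun x ↦ (cutoff (Esp N) 0 x : ℂ) :=
    ⟨Complex.ofRealCLM.contDiff.comp (contDiff_cutoff 0),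
      (hasCompactSupport_cutoff 0).comp_left (g := fun t : ℝ ↦ (t : ℂ)) Complex.ofReal_zero⟩
  refine ⟨ofTestFun hφ, fun h ↦ ?_⟩
  have hzero := congrFun ((hφ.1.continuous.ae_eq_iff_eq volume continuous_zero).1 h) 0
  have hone : cutoff (Esp N) 0 0 = 1 := by
    rw [cutoff]
    exact ContDiffBump.one_of_mem_closedBall _ (by simp)
  simp [hone] at hzero

end H2

end SobolevSpace

section SobolevFourier

open Metric
open scoped ENNReal FourierTransform

lemma eLpNorm_fourier_toLp {E : Type*} [NormedAddCommGroup E] [InnerProductSpace ℝ E]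
    [FiniteDimensional ℝ E] [MeasurableSpace E] [BorelSpace E] {f : E → ℂ} (hf : MemLp f 2) :
    eLpNorm (𝓕 (hf.toLp f) : L²(E)) 2 volume = eLpNorm f 2 volume := by
  rw [← Lp.enorm_def, ← ofReal_norm, Lp.norm_fourier_eq, ofReal_norm, Lp.enorm_toLp]

variable {N : ℕ}

namespace H2

/-- The class of `u` in `L²`, which is where its Fourier transform and weak limits live. -/
def uLp (U : H2 N) : L²(Esp N) := U.u_mem.toLp U.u

/-- The class of `∂ᵢu` in `L²`. -/
def gradLp (U : H2 N) (i : Fin N) : L²(Esp N) := (U.grad_mem i).toLp (U.grad i)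

/-- The class of `Δu` in `L²`. -/
def laplLp (U : H2 N) : L²(Esp N) := U.lapl_mem.toLp U.lapl

lemma eLpNorm_fourier_uLp (U : H2 N) :
    eLpNorm (𝓕 U.uLp : L²(Esp N)) 2 volume = eLpNorm U.u 2 volume :=
  eLpNorm_fourier_toLp U.u_mem

lemma eLpNorm_fourier_gradLp (U : H2 N) (i : Fin N) :
    eLpNorm (𝓕 (U.gradLp i) : L²(Esp N)) 2 volume = eLpNorm (U.grad i) 2 volume :=
  eLpNorm_fourier_toLp (U.grad_mem i)

lemma eLpNorm_fourier_laplLp (U : H2 N) :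
    eLpNorm (𝓕 U.laplLp : L²(Esp N)) 2 volume = eLpNorm U.lapl 2 volume :=
  eLpNorm_fourier_toLp U.lapl_mem

lemma fourier_gradLp_ae_eq (U : H2 N) (i : Fin N) : (𝓕 (U.gradLp i) : L²(Esp N)) =ᵐ[volume]
    fun ξ ↦ derivSymbol (EuclideanSpace.single i 1) ξ * (𝓕 U.uLp : L²(Esp N)) ξ := by
  have h := (U.hasWeakDiv_grad i).fourier_ae_eq (fun _ ↦ U.u_mem) (U.grad_mem i)
  simp only [Finset.univ_unique, Finset.sum_singleton] at h
  exact h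

lemma derivSymbol_single (i : Fin N) (ξ : Esp N) :
    derivSymbol (EuclideanSpace.single i 1) ξ = 2 * Real.pi * Complex.I * ξ i := by
  rw [derivSymbol, EuclideanSpace.inner_single_right]
  simp

lemma fourier_laplLp_ae_eq (U : H2 N) : (𝓕 U.laplLp : L²(Esp N)) =ᵐ[volume]
    fun ξ ↦ -((2 * Real.pi * ‖ξ‖) ^ 2 : ℝ) * (𝓕 U.uLp : L²(Esp N)) ξ := by
  filter_upwards [U.hasWeakDiv_lapl.fourier_ae_eq U.grad_mem U.lapl_mem,
    ae_all_iff.2 U.fourier_gradLp_ae_eq] with ξ hlapl hgrad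
  have hsum : (‖ξ‖ ^ 2 : ℝ) = ∑ i, (ξ i : ℂ) ^ 2 := by
    rw [EuclideanSpace.real_norm_sq_eq]
    push_cast
    rfl
  rw [laplLp, hlapl]
  simp only [gradLp] at hgrad
  simp only [hgrad, derivSymbol_single, mul_pow, Complex.ofReal_mul, hsum, Finset.mul_sum,
    Finset.sum_mul, ← Finset.sum_neg_distrib]
  refine Finset.sum_congr rfl fun i _ ↦ ?_
  push_cast
  linear_combination (4 * (Real.pi : ℂ) ^ 2 * ξ i ^ 2 * (𝓕 U.uLp : L²(Esp N)) ξ) * Complex.I_sq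

lemma eLpNorm_grad_le (U : H2 N) (i : Fin N) :
    eLpNorm (U.grad i) 2 volume ≤ eLpNorm U.u 2 volume + eLpNorm U.lapl 2 volume := by
  have hpointwise : ∀ᵐ ξ, ‖(𝓕 (U.gradLp i) : L²(Esp N)) ξ‖ ≤
      ‖(𝓕 U.uLp : L²(Esp N)) ξ‖ + ‖(𝓕 U.laplLp : L²(Esp N)) ξ‖ := by
    filter_upwards [U.fourier_gradLp_ae_eq i, U.fourier_laplLp_ae_eq] with ξ hgrad hlapl
    have hi : 2 * Real.pi * ‖ξ i‖ ≤ 1 + (2 * Real.pi * ‖ξ‖) ^ 2 := by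
      have : 2 * Real.pi * ‖ξ i‖ ≤ 2 * Real.pi * ‖ξ‖ := by
        gcongr
        exact PiLp.norm_apply_le ξ i
      nlinarith [sq_nonneg (2 * Real.pi * ‖ξ‖ - 1)]
    have hsymbol : ‖derivSymbol (EuclideanSpace.single i 1) ξ‖ = 2 * Real.pi * ‖ξ i‖ := by
      simp [derivSymbol_single, Real.pi_pos.le]
    rw [hgrad, hlapl, norm_mul, norm_mul, hsymbol, norm_neg, Complex.norm_real,
      Real.norm_of_nonneg (sq_nonneg _)]
    exact (mul_le_mul_of_nonneg_right hi (norm_nonneg _)).trans_eq (by ring)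
  rw [← eLpNorm_fourier_gradLp, ← eLpNorm_fourier_uLp, ← eLpNorm_fourier_laplLp]
  refine (eLpNorm_mono_ae_real hpointwise).trans ?_
  refine (eLpNorm_add_le (Lp.aestronglyMeasurable _).norm
    (Lp.aestronglyMeasurable _).norm one_le_two).trans_eq ?_
  exact congrArg₂ (· + ·) (eLpNorm_norm _) (eLpNorm_norm _)

lemma norm_sq_mul_norm_fourier_uLp_le (U : H2 N) :
    ∀ᵐ ξ, ‖ξ‖ ^ (2 : ℝ) * ‖(𝓕 U.uLp : L²(Esp N)) ξ‖ ≤ ‖(𝓕 U.laplLp : L²(Esp N)) ξ‖ := by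
  filter_upwards [U.fourier_laplLp_ae_eq] with ξ hlapl
  rw [hlapl, norm_mul, norm_neg, Complex.norm_real, Real.norm_of_nonneg (by positivity),
    Real.rpow_two]
  gcongr
  exact le_mul_of_one_le_left (norm_nonneg _) (by linarith [Real.two_le_pi])

end H2

/-- The exponents `p` for which `H²(ℝ^N)` embeds in `L^p` with room to spare: `2 < p < 2**`. -/
structure IsSubcritical (N : ℕ) (p : ℝ) : Prop where
  two_lt : 2 < p
  lt_two : N * (1 / 2 - 1 / p) < 2

variable {p : ℝ}

lemma IsSubcritical.pos (hp : IsSubcritical N p) : 0 < p := two_pos.trans hp.two_lt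

lemma IsSubcritical.one_le (hp : IsSubcritical N p) : 1 ≤ p := by linarith [hp.two_lt]

lemma IsSubcritical.ofReal_ne_zero (hp : IsSubcritical N p) : ENNReal.ofReal p ≠ 0 := by
  simpa using hp.pos

lemma IsSubcritical.one_le_ofReal (hp : IsSubcritical N p) : 1 ≤ ENNReal.ofReal p := by
  simpa using hp.one_le

lemma IsSubcritical.exists_eLpNorm_sub_freqProj_le (hp : IsSubcritical N p) :
    ∃ C : ℝ≥0∞, C ≠ ∞ ∧ ∀ (U : H2 N) (R : ℝ), 0 < R →
      eLpNorm (U.u - freqProj (ball 0 R) U.uLp) (ENNReal.ofReal p) volume ≤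
        C * ENNReal.ofReal (R ^ (N * (1 / 2 - 1 / p) - 2)) * eLpNorm U.lapl 2 volume := by
  have hlt : Module.finrank ℝ (Esp N) * (1 / 2 - 1 / p) < 2 := by simpa using hp.lt_two
  obtain ⟨C, hC, h⟩ := exists_eLpNorm_sub_freqProj_ball_le hp.two_lt hlt
  refine ⟨C, hC, fun U R hR ↦ ?_⟩
  have hU := h U.uLp (𝓕 U.laplLp : L²(Esp N)) U.norm_sq_mul_norm_fourier_uLp_le R hR
  rw [finrank_euclideanSpace_fin, H2.eLpNorm_fourier_laplLp] at hU
  refine (eLpNorm_congr_ae ?_).trans_le hU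
  exact U.u_mem.coeFn_toLp.symm.sub .rfl

lemma H2.continuous_freqProj_ball (U : H2 N) (R : ℝ) :
    Continuous (freqProj (ball 0 R) U.uLp) :=
  continuous_freqProj _ measurableSet_ball measure_ball_lt_top.ne

lemma IsSubcritical.eLpNorm_le_add_freqProj (hp : IsSubcritical N p) (U : H2 N) (R : ℝ)
    (s : Set (Esp N)) :
    eLpNorm U.u (ENNReal.ofReal p) (volume.restrict s) ≤
      eLpNorm (U.u - freqProj (ball 0 R) U.uLp) (ENNReal.ofReal p) volume +
        eLpNorm (freqProj (ball 0 R) U.uLp) (ENNReal.ofReal p) (volume.restrict s) := by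
  have hproj := (U.continuous_freqProj_ball R).aestronglyMeasurable (μ := volume)
  calc eLpNorm U.u (ENNReal.ofReal p) (volume.restrict s)
      = eLpNorm (U.u - freqProj (ball 0 R) U.uLp + freqProj (ball 0 R) U.uLp) (ENNReal.ofReal p)
          (volume.restrict s) := by rw [sub_add_cancel]
    _ ≤ _ := eLpNorm_add_le (U.u_mem.1.sub hproj).restrict hproj.restrict hp.one_le_ofReal
    _ ≤ _ := by
        gcongr
        exact Measure.restrict_le_self

lemma IsSubcritical.exists_eLpNorm_le (hp : IsSubcritical N p) :
    ∃ C : ℝ≥0∞, C ≠ ∞ ∧ ∀ U : H2 N, eLpNorm U.u (ENNReal.ofReal p) volume ≤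
      C * (eLpNorm U.u 2 volume + eLpNorm U.lapl 2 volume) := by
  obtain ⟨C, hC, htail⟩ := hp.exists_eLpNorm_sub_freqProj_le
  set D := volume (ball (0 : Esp N) 1) ^ (1 / 2 - 1 / p)
  have hexp : 0 ≤ 1 / 2 - 1 / p :=
    sub_nonneg.2 (one_div_le_one_div_of_le two_pos hp.two_lt.le)
  have hD : D ≠ ∞ := ENNReal.rpow_ne_top_of_nonneg hexp measure_ball_lt_top.ne
  refine ⟨C + D, ENNReal.add_ne_top.2 ⟨hC, hD⟩, fun U ↦ ?_⟩
  calc eLpNorm U.u (ENNReal.ofReal p) volume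
      ≤ eLpNorm (U.u - freqProj (ball 0 1) U.uLp) (ENNReal.ofReal p) volume +
          eLpNorm (freqProj (ball 0 1) U.uLp) (ENNReal.ofReal p) volume := by
        simpa only [Measure.restrict_univ] using hp.eLpNorm_le_add_freqProj U 1 Set.univ
    _ ≤ C * eLpNorm U.lapl 2 volume + D * eLpNorm U.u 2 volume := by
        gcongr
        · simpa using htail U 1 one_pos
        · refine (eLpNorm_freqProj_le _ measurableSet_ball measure_ball_lt_top.ne
            hp.two_lt).trans ?_
          gcongr
          exact (eLpNorm_indicator_le _).trans_eq U.eLpNorm_fourier_uLp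
    _ ≤ (C + D) * (eLpNorm U.u 2 volume + eLpNorm U.lapl 2 volume) := by
        rw [mul_add, add_comm]
        gcongr <;> simp

lemma IsSubcritical.memLp (hp : IsSubcritical N p) (U : H2 N) :
    MemLp U.u (ENNReal.ofReal p) := by
  obtain ⟨C, hC, h⟩ := hp.exists_eLpNorm_le
  exact ⟨U.u_mem.1, (h U).trans_lt
    (ENNReal.mul_lt_top hC.lt_top (ENNReal.add_lt_top.2 ⟨U.u_mem.2, U.lapl_mem.2⟩))⟩

end SobolevFourier

section SobolevInfimum

open scoped ENNReal

variable {N : ℕ} {p : ℝ} {f : Esp N → ℂ}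

lemma rLp_nonneg (p : ℝ) (f : Esp N → ℂ) : 0 ≤ rLp p f := ENNReal.toReal_nonneg

lemma rLp_two (f : Esp N → ℂ) : rLp 2 f = (eLpNorm f 2 volume).toReal := by
  rw [rLp, ENNReal.ofReal_ofNat]

lemma integral_norm_rpow_eq_rLp_rpow (hp : 0 < p) (hf : MemLp f (ENNReal.ofReal p)) :
    ∫ x, ‖f x‖ ^ p = rLp p f ^ p := by
  rw [rLp, hf.eLpNorm_eq_integral_rpow_norm (by simpa using hp) ENNReal.ofReal_ne_top,
    ENNReal.toReal_ofReal hp.le, ENNReal.toReal_ofReal (by positivity),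
    Real.rpow_inv_rpow (by positivity) hp.ne']

lemma integral_norm_sq_eq_rLp_two_sq (hf : MemLp f 2) : ∫ x, ‖f x‖ ^ 2 = rLp 2 f ^ 2 := by
  have h := integral_norm_rpow_eq_rLp_rpow two_pos (by simpa using hf)
  simpa only [Real.rpow_two] using h

lemma rLp_const_smul (p : ℝ) (c : ℂ) (f : Esp N → ℂ) : rLp p (c • f) = ‖c‖ * rLp p f := by
  rw [rLp, eLpNorm_const_smul, ENNReal.toReal_mul, toReal_enorm, rLp]

lemma rLp_comp_add_right (p : ℝ) (hf : AEStronglyMeasurable f) (a : Esp N) :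
    rLp p (fun x ↦ f (x + a)) = rLp p f :=
  congrArg ENNReal.toReal
    (eLpNorm_comp_measurePreserving hf (measurePreserving_add_right volume a))

lemma rLp_comp_smul (hp : 0 < p) (hf : AEStronglyMeasurable f) {r : ℝ} (hr : 0 < r) :
    rLp p (fun x ↦ f (r • x)) = r ^ (-(N / p)) * rLp p f := by
  rw [rLp, eLpNorm_comp_smul hf hr.ne' ENNReal.ofReal_ne_top, ENNReal.toReal_mul, rLp,
    one_div, ENNReal.toReal_inv, ENNReal.toReal_ofReal hp.le, finrank_euclideanSpace_fin,
    abs_of_pos (by positivity), ENNReal.ofReal_rpow_of_pos (by positivity),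
    ENNReal.toReal_ofReal (by positivity), ← Real.rpow_natCast, ← Real.rpow_neg hr.le,
    ← Real.rpow_mul hr.le, neg_mul, div_eq_mul_inv]

namespace H2

lemma massSq_eq (U : H2 N) : U.massSq = rLp 2 U.u ^ 2 := integral_norm_sq_eq_rLp_two_sq U.u_mem

lemma lapSq_eq (U : H2 N) : U.lapSq = rLp 2 U.lapl ^ 2 :=
  integral_norm_sq_eq_rLp_two_sq U.lapl_mem

lemma Kfun_eq (U : H2 N) : Kfun U = rLp 2 U.lapl ^ 2 + rLp 2 U.u ^ 2 := by
  rw [Kfun, massSq_eq, lapSq_eq]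

lemma Kfun_nonneg (U : H2 N) : 0 ≤ Kfun U := by
  rw [Kfun_eq]
  positivity

lemma Kfun_smul (c : ℂ) (U : H2 N) : Kfun (c • U) = ‖c‖ ^ 2 * Kfun U := by
  rw [Kfun_eq, Kfun_eq, smul_u, smul_lapl, rLp_const_smul, rLp_const_smul]
  ring

lemma Kfun_translate (U : H2 N) (a : Esp N) : Kfun (U.translate a) = Kfun U := by
  rw [Kfun_eq, Kfun_eq]
  exact congrArg₂ (fun s t ↦ s ^ 2 + t ^ 2) (rLp_comp_add_right 2 U.lapl_mem.1 a)
    (rLp_comp_add_right 2 U.u_mem.1 a)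

lemma rLp_smul_inv_rLp {U : H2 N} (hU : 0 < rLp p U.u) :
    rLp p (((rLp p U.u)⁻¹ : ℂ) • U).u = 1 := by
  rw [smul_u, rLp_const_smul, norm_inv, Complex.norm_real, Real.norm_of_nonneg hU.le,
    inv_mul_cancel₀ hU.ne']

end H2

lemma IsSubcritical.rLp_pos (hp : IsSubcritical N p) {U : H2 N} (hU : U.Nontriv) :
    0 < rLp p U.u :=
  ENNReal.toReal_pos (fun h ↦ hU ((eLpNorm_eq_zero_iff U.u_mem.1 hp.ofReal_ne_zero).1 h))
    (hp.memLp U).2.ne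

/-- The infimum of `K` on the unit sphere of `L^p`; `Iconst N σ` is the case `p = 2σ + 2`. -/
def sobolevInf (N : ℕ) (p : ℝ) : ℝ := sInf {r : ℝ | ∃ U : H2 N, rLp p U.u = 1 ∧ r = Kfun U}

lemma sobolevInf_le {U : H2 N} (hU : rLp p U.u = 1) : sobolevInf N p ≤ Kfun U :=
  csInf_le ⟨0, by rintro r ⟨V, _, rfl⟩; exact V.Kfun_nonneg⟩ ⟨U, hU, rfl⟩

lemma sobolevInf_mul_rLp_sq_le (U : H2 N) : sobolevInf N p * rLp p U.u ^ 2 ≤ Kfun U := by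
  rcases (rLp_nonneg p U.u).eq_or_lt with h | h
  · rw [← h]
    simpa using U.Kfun_nonneg
  · have hle := sobolevInf_le (H2.rLp_smul_inv_rLp h)
    rwa [H2.Kfun_smul, norm_inv, Complex.norm_real, Real.norm_of_nonneg h.le, inv_pow,
      ← div_eq_inv_mul, le_div_iff₀ (by positivity)] at hle

lemma IsSubcritical.exists_rLp_sq_le (hp : IsSubcritical N p) :
    ∃ C, 0 < C ∧ ∀ U : H2 N, rLp p U.u ^ 2 ≤ C * Kfun U := by
  obtain ⟨C, hC, h⟩ := hp.exists_eLpNorm_le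
  refine ⟨2 * C.toReal ^ 2 + 1, by positivity, fun U ↦ ?_⟩
  have hfinite : eLpNorm U.u 2 volume + eLpNorm U.lapl 2 volume ≠ ∞ :=
    ENNReal.add_ne_top.2 ⟨U.u_mem.2.ne, U.lapl_mem.2.ne⟩
  have hreal : rLp p U.u ≤ C.toReal * (rLp 2 U.u + rLp 2 U.lapl) := by
    rw [rLp_two, rLp_two, ← ENNReal.toReal_add U.u_mem.2.ne U.lapl_mem.2.ne, ← ENNReal.toReal_mul]
    exact ENNReal.toReal_mono (ENNReal.mul_ne_top hC hfinite) (h U)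
  calc rLp p U.u ^ 2 ≤ (C.toReal * (rLp 2 U.u + rLp 2 U.lapl)) ^ 2 :=
        pow_le_pow_left₀ (rLp_nonneg p U.u) hreal 2
    _ ≤ 2 * C.toReal ^ 2 * Kfun U := by
        rw [U.Kfun_eq, mul_pow, mul_comm 2, mul_assoc, add_comm (rLp 2 U.lapl ^ 2)]
        exact mul_le_mul_of_nonneg_left add_sq_le (sq_nonneg _)
    _ ≤ (2 * C.toReal ^ 2 + 1) * Kfun U :=
        mul_le_mul_of_nonneg_right (by linarith) U.Kfun_nonneg

theorem IsSubcritical.sobolevInf_pos (hp : IsSubcritical N p) : 0 < sobolevInf N p := by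
  obtain ⟨C, hC, h⟩ := hp.exists_rLp_sq_le
  obtain ⟨U, hU⟩ := H2.exists_nontriv N
  refine (one_div_pos.2 hC).trans_le (le_csInf ⟨_, _, H2.rLp_smul_inv_rLp (hp.rLp_pos hU), rfl⟩ ?_)
  rintro r ⟨V, hV, rfl⟩
  rw [div_le_iff₀ hC, mul_comm]
  simpa [hV] using h V

end SobolevInfimum

section GagliardoNirenberg

variable {θ a b c : ℝ}

lemma rpow_mul_rpow_le_mul_add (hθ : 0 < θ) (hθ' : θ < 1) (ha : 0 ≤ a) (hb : 0 ≤ b) :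
    a ^ θ * b ^ (1 - θ) ≤ θ ^ θ * (1 - θ) ^ (1 - θ) * (a + b) := by
  have hθ1 : 0 < 1 - θ := sub_pos.2 hθ'
  have h := Real.geom_mean_le_arith_mean2_weighted hθ.le hθ1.le (div_nonneg ha hθ.le)
    (div_nonneg hb hθ1.le) (by ring)
  rw [mul_div_cancel₀ _ hθ.ne', mul_div_cancel₀ _ hθ1.ne', Real.div_rpow ha hθ.le,
    Real.div_rpow hb hθ1.le, div_mul_div_comm, div_le_iff₀ (by positivity)] at h
  linarith

lemma mul_le_rpow_mul_rpow_of_forall_scale_of_pos (hθ : 0 < θ) (hθ' : θ < 1) (ha : 0 < a)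
    (hb : 0 < b) (h : ∀ s, 0 < s → c ≤ s ^ (1 - θ) * a + s ^ (-θ) * b) :
    θ ^ θ * (1 - θ) ^ (1 - θ) * c ≤ a ^ θ * b ^ (1 - θ) := by
  have hθ1 : 0 < 1 - θ := sub_pos.2 hθ'
  obtain ⟨x, hx, rfl⟩ : ∃ x, 0 < x ∧ a = θ * x := ⟨a / θ, by positivity, by field_simp⟩
  obtain ⟨y, hy, rfl⟩ : ∃ y, 0 < y ∧ b = (1 - θ) * y := ⟨b / (1 - θ), by positivity, by field_simp⟩
  have hopt : c ≤ x ^ θ * y ^ (1 - θ) := by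
    refine (h (y / x) (by positivity)).trans_eq ?_
    rw [Real.div_rpow hy.le hx.le, Real.div_rpow hy.le hx.le, Real.rpow_neg hx.le,
      Real.rpow_neg hy.le, Real.rpow_sub hy, Real.rpow_sub hx, Real.rpow_one, Real.rpow_one]
    field_simp
    ring
  rw [Real.mul_rpow hθ.le hx.le, Real.mul_rpow hθ1.le hy.le, mul_mul_mul_comm]
  gcongr

lemma mul_le_rpow_mul_rpow_of_forall_scale (hθ : 0 < θ) (hθ' : θ < 1) (ha : 0 ≤ a) (hb : 0 ≤ b)
    (h : ∀ s, 0 < s → c ≤ s ^ (1 - θ) * a + s ^ (-θ) * b) :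
    θ ^ θ * (1 - θ) ^ (1 - θ) * c ≤ a ^ θ * b ^ (1 - θ) := by
  have hcont : Continuous fun ε ↦ (a + ε) ^ θ * (b + ε) ^ (1 - θ) :=
    ((continuous_const.add continuous_id).rpow_const fun _ ↦ .inr hθ.le).mul
      ((continuous_const.add continuous_id).rpow_const fun _ ↦ .inr (sub_pos.2 hθ').le)
  have hlim := (hcont.tendsto 0).mono_left (nhdsWithin_le_nhds (s := Set.Ioi 0))
  simp only [add_zero] at hlim
  refine ge_of_tendsto hlim (eventually_mem_nhdsWithin.mono fun ε hε ↦ ?_)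
  have hε : 0 < ε := hε
  refine mul_le_rpow_mul_rpow_of_forall_scale_of_pos hθ hθ' (by positivity) (by positivity)
    fun s hs ↦ (h s hs).trans ?_
  gcongr <;> linarith

variable {N : ℕ} {p : ℝ}

/-- The exponent of `‖Δu‖₂` when `‖u‖_p` is interpolated between `‖Δu‖₂` and `‖u‖₂`. -/
def gnExponent (N : ℕ) (p : ℝ) : ℝ := N * (1 / 2 - 1 / p) / 2

/-- The interpolated quantity `‖Δu‖₂^θ ‖u‖₂^{1-θ}` controlling `‖u‖_p`. -/
def H2.gnNorm (p : ℝ) (U : H2 N) : ℝ :=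
  rLp 2 U.lapl ^ gnExponent N p * rLp 2 U.u ^ (1 - gnExponent N p)

lemma H2.gnNorm_nonneg (p : ℝ) (U : H2 N) : 0 ≤ U.gnNorm p :=
  mul_nonneg (Real.rpow_nonneg (rLp_nonneg _ _) _) (Real.rpow_nonneg (rLp_nonneg _ _) _)

lemma H2.gnNorm_sq (p : ℝ) (U : H2 N) : U.gnNorm p ^ 2 =
    (rLp 2 U.lapl ^ 2) ^ gnExponent N p * (rLp 2 U.u ^ 2) ^ (1 - gnExponent N p) := by
  rw [gnNorm, mul_pow, Real.rpow_pow_comm (rLp_nonneg _ _), Real.rpow_pow_comm (rLp_nonneg _ _)]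

lemma IsSubcritical.gnExponent_pos (hp : IsSubcritical N p) (hN : 1 ≤ N) :
    0 < gnExponent N p := by
  have : (0 : ℝ) < N := by exact_mod_cast hN
  have hgap : 0 < 1 / 2 - 1 / p := sub_pos.2 (one_div_lt_one_div_of_lt two_pos hp.two_lt)
  rw [gnExponent]
  positivity

lemma IsSubcritical.gnExponent_lt_one (hp : IsSubcritical N p) : gnExponent N p < 1 := by
  rw [gnExponent]
  linarith [hp.lt_two]

lemma sobolevInf_mul_rLp_sq_le_scale (hp : 0 < p) (U : H2 N) {s : ℝ} (hs : 0 < s) :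
    sobolevInf N p * rLp p U.u ^ 2 ≤ s ^ (1 - gnExponent N p) * rLp 2 U.lapl ^ 2 +
      s ^ (-gnExponent N p) * rLp 2 U.u ^ 2 := by
  obtain ⟨r, hr, rfl⟩ : ∃ r : ℝ, 0 < r ∧ s = r ^ (4 : ℝ) :=
    ⟨s ^ (4⁻¹ : ℝ), by positivity, (Real.rpow_inv_rpow hs.le four_ne_zero).symm⟩
  have hlapl : rLp 2 (U.dilate hr.ne').lapl = r * r * (r ^ (-(N / 2 : ℝ)) * rLp 2 U.lapl) := by
    rw [H2.dilate_lapl, rLp_const_smul, rLp_comp_smul two_pos U.lapl_mem.1 hr, norm_mul,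
      Complex.norm_real, Real.norm_of_nonneg hr.le]
  have hu (q : ℝ) (hq : 0 < q) : rLp q (U.dilate hr.ne').u = r ^ (-(N / q)) * rLp q U.u :=
    rLp_comp_smul hq U.u_mem.1 hr
  have hdilate := sobolevInf_mul_rLp_sq_le (p := p) (U.dilate hr.ne')
  rw [H2.Kfun_eq, hlapl, hu 2 two_pos, hu p hp] at hdilate
  have hexp : r ^ (-(N / 2 : ℝ)) =
      r ^ (-(N / p)) * r ^ (-2 * gnExponent N p) := by
    rw [← Real.rpow_add hr, gnExponent]
    congr 1
    ring
  have hone : (r ^ (4 : ℝ)) ^ (1 - gnExponent N p) = r ^ 4 * (r ^ (-2 * gnExponent N p)) ^ 2 := by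
    rw [← Real.rpow_natCast, ← Real.rpow_natCast, ← Real.rpow_mul hr.le, ← Real.rpow_mul hr.le,
      ← Real.rpow_add hr]
    congr 1
    push_cast
    ring
  have hzero : (r ^ (4 : ℝ)) ^ (-gnExponent N p) = (r ^ (-2 * gnExponent N p)) ^ 2 := by
    rw [← Real.rpow_natCast, ← Real.rpow_mul hr.le, ← Real.rpow_mul hr.le]
    congr 1
    push_cast
    ring
  rw [hexp] at hdilate
  rw [hone, hzero]
  refine le_of_mul_le_mul_left ?_ (by positivity : 0 < (r ^ (-(N / p))) ^ 2)
  linarith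

lemma IsSubcritical.mul_rLp_sq_le_gnNorm_sq (hp : IsSubcritical N p) (hN : 1 ≤ N) (U : H2 N) :
    gnExponent N p ^ gnExponent N p * (1 - gnExponent N p) ^ (1 - gnExponent N p) *
      (sobolevInf N p * rLp p U.u ^ 2) ≤ U.gnNorm p ^ 2 := by
  rw [H2.gnNorm_sq]
  exact mul_le_rpow_mul_rpow_of_forall_scale (hp.gnExponent_pos hN) hp.gnExponent_lt_one
    (sq_nonneg _) (sq_nonneg _) fun s hs ↦ sobolevInf_mul_rLp_sq_le_scale hp.pos U hs

lemma IsSubcritical.gnNorm_sq_le_mul_Kfun (hp : IsSubcritical N p) (hN : 1 ≤ N) (U : H2 N) :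
    U.gnNorm p ^ 2 ≤ gnExponent N p ^ gnExponent N p *
      (1 - gnExponent N p) ^ (1 - gnExponent N p) * Kfun U := by
  rw [H2.gnNorm_sq, H2.Kfun_eq]
  exact rpow_mul_rpow_le_mul_add (hp.gnExponent_pos hN) hp.gnExponent_lt_one
    (sq_nonneg _) (sq_nonneg _)

lemma IsSubcritical.gnNorm_pos (hp : IsSubcritical N p) (hN : 1 ≤ N) {U : H2 N}
    (hU : 0 < rLp p U.u) : 0 < U.gnNorm p := by
  have hθ := hp.gnExponent_pos hN
  have hθ1 := sub_pos.2 hp.gnExponent_lt_one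
  have hI := hp.sobolevInf_pos
  have hsq : 0 < U.gnNorm p ^ 2 := (hp.mul_rLp_sq_le_gnNorm_sq hN U).trans_lt' (by positivity)
  exact (U.gnNorm_nonneg p).lt_of_ne' fun h ↦ by simp [h] at hsq

lemma IsSubcritical.rLp_div_gnNorm_le (hp : IsSubcritical N p) (hN : 1 ≤ N) {U V : H2 N}
    (hU : rLp p U.u = 1) (hK : Kfun U = sobolevInf N p) (hV : V.Nontriv) :
    rLp p V.u / V.gnNorm p ≤ rLp p U.u / U.gnNorm p := by
  have hsq : (rLp p V.u * U.gnNorm p) ^ 2 ≤ (rLp p U.u * V.gnNorm p) ^ 2 := by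
    rw [hU, one_mul, mul_pow, mul_comm]
    refine le_trans ?_ (hp.mul_rLp_sq_le_gnNorm_sq hN V)
    rw [← mul_assoc, ← hK]
    gcongr
    exact hp.gnNorm_sq_le_mul_Kfun hN U
  rw [div_le_div_iff₀ (hp.gnNorm_pos hN (hp.rLp_pos hV)) (hp.gnNorm_pos hN (hU ▸ one_pos))]
  exact le_of_pow_le_pow_left₀ two_ne_zero (mul_nonneg (rLp_nonneg _ _) (V.gnNorm_nonneg p)) hsq

lemma H2.nontriv_of_rLp_pos {U : H2 N} (hU : 0 < rLp p U.u) : U.Nontriv := fun h ↦ by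
  simp [rLp, eLpNorm_congr_ae h] at hU

lemma IsSubcritical.integral_norm_rpow_div_eq (hp : IsSubcritical N p) (U : H2 N) :
    (∫ x, ‖U.u x‖ ^ p) /
        (rLp 2 U.lapl ^ (p * gnExponent N p) * rLp 2 U.u ^ (p * (1 - gnExponent N p))) =
      (rLp p U.u / U.gnNorm p) ^ p := by
  have hlapl := rLp_nonneg 2 U.lapl
  have hu := rLp_nonneg 2 U.u
  rw [integral_norm_rpow_eq_rLp_rpow hp.pos (hp.memLp U),
    Real.div_rpow (rLp_nonneg _ _) (U.gnNorm_nonneg p), H2.gnNorm,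
    Real.mul_rpow (by positivity) (by positivity), ← Real.rpow_mul hlapl, ← Real.rpow_mul hu,
    mul_comm p, mul_comm p]

theorem IsSubcritical.isGreatest_of_Kfun_eq_sobolevInf (hp : IsSubcritical N p) (hN : 1 ≤ N)
    {U : H2 N} (hU : rLp p U.u = 1) (hK : Kfun U = sobolevInf N p) :
    IsGreatest {r | ∃ V : H2 N, V.Nontriv ∧ r = (∫ x, ‖V.u x‖ ^ p) /
        (rLp 2 V.lapl ^ (p * gnExponent N p) * rLp 2 V.u ^ (p * (1 - gnExponent N p)))}
      ((∫ x, ‖U.u x‖ ^ p) /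
        (rLp 2 U.lapl ^ (p * gnExponent N p) * rLp 2 U.u ^ (p * (1 - gnExponent N p)))) := by
  refine ⟨⟨U, H2.nontriv_of_rLp_pos (hU ▸ one_pos), rfl⟩, ?_⟩
  rintro r ⟨V, hV, rfl⟩
  rw [hp.integral_norm_rpow_div_eq, hp.integral_norm_rpow_div_eq]
  exact Real.rpow_le_rpow (div_nonneg (rLp_nonneg _ _) (V.gnNorm_nonneg p))
    (hp.rLp_div_gnNorm_le hN hU hK hV) hp.pos.le

end GagliardoNirenberg

section WeakCompactness

open Metric
open scoped ENNReal FourierTransform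

variable {N : ℕ} {p M : ℝ} {v : ℕ → H2 N} {U : H2 N}

namespace H2

lemma norm_uLp (U : H2 N) : ‖U.uLp‖ = rLp 2 U.u := by
  rw [uLp, Lp.norm_toLp, rLp_two]

lemma norm_laplLp (U : H2 N) : ‖U.laplLp‖ = rLp 2 U.lapl := by
  rw [laplLp, Lp.norm_toLp, rLp_two]

lemma Kfun_eq_norm_sq_add_norm_sq (U : H2 N) : Kfun U = ‖U.laplLp‖ ^ 2 + ‖U.uLp‖ ^ 2 := by
  rw [Kfun_eq, norm_uLp, norm_laplLp]

lemma norm_uLp_le_sqrt_Kfun (U : H2 N) : ‖U.uLp‖ ≤ √(Kfun U) :=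
  Real.le_sqrt_of_sq_le (by linarith [U.Kfun_eq_norm_sq_add_norm_sq, sq_nonneg ‖U.laplLp‖])

lemma norm_laplLp_le_sqrt_Kfun (U : H2 N) : ‖U.laplLp‖ ≤ √(Kfun U) :=
  Real.le_sqrt_of_sq_le (by linarith [U.Kfun_eq_norm_sq_add_norm_sq, sq_nonneg ‖U.uLp‖])

lemma eLpNorm_u_eq_ofReal_norm (U : H2 N) : eLpNorm U.u 2 volume = ENNReal.ofReal ‖U.uLp‖ := by
  rw [ofReal_norm, uLp, Lp.enorm_toLp]

lemma eLpNorm_lapl_eq_ofReal_norm (U : H2 N) :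
    eLpNorm U.lapl 2 volume = ENNReal.ofReal ‖U.laplLp‖ := by
  rw [ofReal_norm, laplLp, Lp.enorm_toLp]

lemma eLpNorm_u_le (U : H2 N) : eLpNorm U.u 2 volume ≤ ENNReal.ofReal √(Kfun U) := by
  rw [eLpNorm_u_eq_ofReal_norm]
  exact ENNReal.ofReal_le_ofReal U.norm_uLp_le_sqrt_Kfun

lemma eLpNorm_lapl_le (U : H2 N) : eLpNorm U.lapl 2 volume ≤ ENNReal.ofReal √(Kfun U) := by
  rw [eLpNorm_lapl_eq_ofReal_norm]
  exact ENNReal.ofReal_le_ofReal U.norm_laplLp_le_sqrt_Kfun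

lemma norm_gradLp_le (U : H2 N) (i : Fin N) : ‖U.gradLp i‖ ≤ 2 * √(Kfun U) := by
  have h : ENNReal.ofReal ‖U.gradLp i‖ ≤ ENNReal.ofReal (√(Kfun U) + √(Kfun U)) := by
    rw [ofReal_norm, gradLp, Lp.enorm_toLp, ENNReal.ofReal_add (by positivity) (by positivity)]
    exact (U.eLpNorm_grad_le i).trans (add_le_add U.eLpNorm_u_le U.eLpNorm_lapl_le)
  rw [two_mul]
  exact (ENNReal.ofReal_le_ofReal_iff (by positivity)).1 h

lemma hasWeakDiv_gradLp (U : H2 N) (i : Fin N) :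
    HasWeakDiv (fun _ : Unit ↦ EuclideanSpace.single i (1 : ℝ)) (fun _ ↦ U.uLp) (U.gradLp i) :=
  (U.hasWeakDiv_grad i).congr_ae (fun _ ↦ U.u_mem.coeFn_toLp.symm) (U.grad_mem i).coeFn_toLp.symm

lemma hasWeakDiv_laplLp (U : H2 N) :
    HasWeakDiv (fun i ↦ EuclideanSpace.single i (1 : ℝ)) (fun i ↦ U.gradLp i) U.laplLp :=
  U.hasWeakDiv_lapl.congr_ae (fun i ↦ (U.grad_mem i).coeFn_toLp.symm) U.lapl_mem.coeFn_toLp.symm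

lemma uLp_sub (U V : H2 N) : (U - V).uLp = U.uLp - V.uLp := MemLp.toLp_sub U.u_mem V.u_mem

lemma laplLp_sub (U V : H2 N) : (U - V).laplLp = U.laplLp - V.laplLp :=
  MemLp.toLp_sub U.lapl_mem V.lapl_mem

end H2

/-- Weak convergence in `H²(ℝ^N)`, tested on `u` and `Δu` only: these control the gradient. -/
structure H2TendstoWeakly (v : ℕ → H2 N) (U : H2 N) : Prop where
  uLp : TendstoWeakly ℂ (fun n ↦ (v n).uLp) U.uLp
  laplLp : TendstoWeakly ℂ (fun n ↦ (v n).laplLp) U.laplLp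

theorem exists_subseq_h2TendstoWeakly (hv : ∀ n, Kfun (v n) ≤ M) :
    ∃ (ψ : ℕ → ℕ) (U : H2 N), StrictMono ψ ∧ H2TendstoWeakly (v ∘ ψ) U := by
  have : Fact ((2 : ℝ≥0∞) ≠ ∞) := ⟨ENNReal.ofNat_ne_top⟩
  let x (i : Option (Option (Fin N))) (n : ℕ) : L²(Esp N) :=
    i.elim (v n).uLp fun j ↦ j.elim (v n).laplLp (v n).gradLp
  have hx (i) (n : ℕ) : ‖x i n‖ ≤ 2 * √M := by
    have hsqrt : √(Kfun (v n)) ≤ √M := Real.sqrt_le_sqrt (hv n)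
    have hpos := Real.sqrt_nonneg (Kfun (v n))
    rcases i with _ | _ | i
    · exact (v n).norm_uLp_le_sqrt_Kfun.trans (by linarith)
    · exact (v n).norm_laplLp_le_sqrt_Kfun.trans (by linarith)
    · exact ((v n).norm_gradLp_le i).trans (by linarith)
  obtain ⟨ψ, a, hψ, ha⟩ := exists_subseq_forall_tendstoWeakly (𝕜 := ℂ) hx
  let U : H2 N := H2.ofWeakDiv (Lp.memLp (a none)) (fun i ↦ Lp.memLp (a (some (some i))))
    (Lp.memLp (a (some none)))
    (fun i ↦ .of_tendstoWeakly (fun n ↦ (v (ψ n)).hasWeakDiv_gradLp i) (fun _ ↦ ha none)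
      (ha (some (some i))))
    (.of_tendstoWeakly (fun n ↦ (v (ψ n)).hasWeakDiv_laplLp) (fun i ↦ ha (some (some i)))
      (ha (some none)))
  have hu : U.uLp = a none := Lp.toLp_coeFn _ _
  have hlapl : U.laplLp = a (some none) := Lp.toLp_coeFn _ _
  exact ⟨ψ, U, hψ, hu ▸ ha none, hlapl ▸ ha (some none)⟩

lemma H2TendstoWeakly.tendsto_Kfun_sub_Kfun_sub (h : H2TendstoWeakly v U) :
    Tendsto (fun n ↦ Kfun (v n) - Kfun (v n - U)) atTop (𝓝 (Kfun U)) := by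
  simp only [H2.Kfun_eq_norm_sq_add_norm_sq, H2.uLp_sub, H2.laplLp_sub, add_sub_add_comm]
  exact h.laplLp.norm_sq_sub_norm_sub_sq.add h.uLp.norm_sq_sub_norm_sub_sq

lemma TendstoWeakly.tendsto_freqProj {E : Type*} [NormedAddCommGroup E] [InnerProductSpace ℝ E]
    [FiniteDimensional ℝ E] [MeasurableSpace E] [BorelSpace E] {f : ℕ → L²(E)} {g : L²(E)}
    (h : TendstoWeakly ℂ f g) {A : Set E} (hA : MeasurableSet A) (hμA : volume A ≠ ∞) (x : E) :
    Tendsto (fun n ↦ freqProj A (f n) x) atTop (𝓝 (freqProj A g x)) := by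
  simp only [freqProj_eq_inner hA hμA]
  exact h _

lemma H2.eLpNorm_indicator_fourier_uLp_le (U : H2 N) (A : Set (Esp N)) (hK : Kfun U ≤ M) :
    eLpNorm (A.indicator (𝓕 U.uLp : L²(Esp N))) 2 volume ≤ ENNReal.ofReal √M :=
  calc eLpNorm (A.indicator (𝓕 U.uLp : L²(Esp N))) 2 volume
      ≤ eLpNorm U.u 2 volume := (eLpNorm_indicator_le _).trans_eq U.eLpNorm_fourier_uLp
    _ ≤ ENNReal.ofReal √(Kfun U) := U.eLpNorm_u_le
    _ ≤ ENNReal.ofReal √M := ENNReal.ofReal_le_ofReal (Real.sqrt_le_sqrt hK)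

lemma IsSubcritical.exists_eLpNorm_sub_freqProj_le_of_Kfun_le (hp : IsSubcritical N p) (M : ℝ)
    {ε : ℝ≥0∞} (hε : 0 < ε) : ∃ R : ℝ, ∀ U : H2 N, Kfun U ≤ M →
      eLpNorm (U.u - freqProj (ball 0 R) U.uLp) (ENNReal.ofReal p) volume ≤ ε := by
  obtain ⟨C, hC, h⟩ := hp.exists_eLpNorm_sub_freqProj_le
  have hexp : 0 < -(N * (1 / 2 - 1 / p) - 2) := by linarith [hp.lt_two]
  have hlim : Tendsto (fun R : ℝ ↦ C * ENNReal.ofReal (R ^ (N * (1 / 2 - 1 / p) - 2)) *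
      ENNReal.ofReal √M) atTop (𝓝 0) := by
    have hrpow := ENNReal.tendsto_ofReal (tendsto_rpow_neg_atTop hexp)
    rw [neg_neg, ENNReal.ofReal_zero] at hrpow
    simpa using ENNReal.Tendsto.mul_const (b := ENNReal.ofReal √M)
      (ENNReal.Tendsto.const_mul hrpow (.inr hC)) (.inr ENNReal.ofReal_ne_top)
  obtain ⟨R, hR, hRpos⟩ := ((ENNReal.tendsto_nhds_zero.1 hlim ε hε).and
    (eventually_gt_atTop 0)).exists
  refine ⟨R, fun U hU ↦ (h U R hRpos).trans (le_trans ?_ hR)⟩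
  gcongr
  exact U.eLpNorm_lapl_le.trans (ENNReal.ofReal_le_ofReal (Real.sqrt_le_sqrt hU))

lemma exists_pos_rpow_mul_le {r : ℝ} (hr : 0 < r) {B ε : ℝ≥0∞} (hB : B ≠ ∞) (hε : 0 < ε) :
    ∃ δ : NNReal, 0 < δ ∧ (δ : ℝ≥0∞) ^ r * B ≤ ε := by
  have hlim : Tendsto (fun δ : NNReal ↦ (δ : ℝ≥0∞) ^ r * B) (𝓝[>] 0) (𝓝 0) := by
    have hrpow := ((ENNReal.continuous_rpow_const (y := r)).comp ENNReal.continuous_coe).tendsto 0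
    simp only [Function.comp_def, ENNReal.coe_zero, ENNReal.zero_rpow_of_pos hr] at hrpow
    simpa using ENNReal.Tendsto.mul_const (hrpow.mono_left nhdsWithin_le_nhds) (.inr hB)
  obtain ⟨δ, hδ, hδpos⟩ := ((ENNReal.tendsto_nhds_zero.1 hlim ε hε).and
    self_mem_nhdsWithin).exists
  exact ⟨δ, hδpos, hδ⟩

lemma IsSubcritical.exists_le_norm_freqProj (hp : IsSubcritical N p) (M : ℝ) :
    ∃ R δ : ℝ, 0 < δ ∧ ∀ U : H2 N, Kfun U ≤ M → 1 / 2 ≤ rLp p U.u →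
      ∃ x, δ ≤ ‖freqProj (ball 0 R) U.uLp x‖ := by
  obtain ⟨R, hR⟩ := hp.exists_eLpNorm_sub_freqProj_le_of_Kfun_le M
    (ε := ENNReal.ofReal (1 / 8)) (by simp)
  obtain ⟨δ, hδpos, hδ⟩ := exists_pos_rpow_mul_le (sub_pos.2 ((div_lt_one hp.pos).2 hp.two_lt))
    (B := ENNReal.ofReal √M ^ (2 / p)) (ε := ENNReal.ofReal (1 / 8))
    (ENNReal.rpow_ne_top_of_nonneg (div_nonneg zero_le_two hp.pos.le) ENNReal.ofReal_ne_top)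
    (by simp)
  refine ⟨R, δ, hδpos, fun U hK hU ↦ ?_⟩
  by_contra! hsmall
  have hsup : ∀ᵐ x ∂(volume : Measure (Esp N)), ‖freqProj (ball 0 R) U.uLp x‖ₑ ≤ δ :=
    .of_forall fun x ↦ ENNReal.coe_le_coe.2 (hsmall x).le
  have hlow : eLpNorm (freqProj (ball 0 R) U.uLp) (ENNReal.ofReal p) volume ≤
      ENNReal.ofReal (1 / 8) := by
    refine (eLpNorm_le_rpow_mul_eLpNorm_two_rpow hp.two_lt hsup).trans (le_trans ?_ hδ)
    rw [eLpNorm_freqProj_two _ measurableSet_ball measure_ball_lt_top.ne]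
    have := hp.pos
    gcongr
    exact U.eLpNorm_indicator_fourier_uLp_le _ hK
  have hsum := hp.eLpNorm_le_add_freqProj U R Set.univ
  rw [Measure.restrict_univ] at hsum
  have hreal : rLp p U.u ≤ 1 / 8 + 1 / 8 := by
    refine ENNReal.toReal_le_of_le_ofReal (by norm_num) (hsum.trans ?_)
    rw [ENNReal.ofReal_add (by norm_num) (by norm_num)]
    exact add_le_add (hR U hK) hlow
  linarith

theorem IsSubcritical.tendsto_eLpNorm_restrict_of_tendstoWeakly_zero (hp : IsSubcritical N p)
    (hK : ∀ n, Kfun (v n) ≤ M) (hv : TendstoWeakly ℂ (fun n ↦ (v n).uLp) 0) {s : Set (Esp N)}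
    (hs : volume s < ∞) :
    Tendsto (fun n ↦ eLpNorm (v n).u (ENNReal.ofReal p) (volume.restrict s)) atTop (𝓝 0) := by
  refine ENNReal.tendsto_nhds_zero.2 fun ε hε ↦ ?_
  obtain ⟨R, hR⟩ := hp.exists_eLpNorm_sub_freqProj_le_of_Kfun_le M (ENNReal.half_pos hε.ne')
  have hball : volume (ball (0 : Esp N) R) ≠ ∞ := measure_ball_lt_top.ne
  have hbound (n : ℕ) (x : Esp N) : ‖freqProj (ball 0 R) (v n).uLp x‖ₑ ≤
      volume (ball (0 : Esp N) R) ^ (1 / 2 : ℝ) * ENNReal.ofReal √M := by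
    refine (enorm_freqProj_le _ measurableSet_ball x).trans ?_
    gcongr
    exact (v n).eLpNorm_indicator_fourier_uLp_le _ (hK n)
  have hpointwise (x : Esp N) : Tendsto (fun n ↦ freqProj (ball 0 R) (v n).uLp x) atTop (𝓝 0) := by
    simpa only [freqProj_zero measurableSet_ball hball] using
      hv.tendsto_freqProj measurableSet_ball hball x
  have : IsFiniteMeasure (volume.restrict s) := ⟨by rwa [Measure.restrict_apply_univ]⟩
  have hlow := tendsto_eLpNorm_of_enorm_le_of_tendsto_zero (μ := volume.restrict s) hp.pos
    (fun n ↦ ((v n).continuous_freqProj_ball R).aestronglyMeasurable)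
    (ENNReal.mul_ne_top (ENNReal.rpow_ne_top_of_nonneg (by norm_num) hball)
      ENNReal.ofReal_ne_top) hbound hpointwise
  filter_upwards [ENNReal.tendsto_nhds_zero.1 hlow (ε / 2) (ENNReal.half_pos hε.ne')] with n hn
  calc eLpNorm (v n).u (ENNReal.ofReal p) (volume.restrict s)
      ≤ ε / 2 + ε / 2 :=
        (hp.eLpNorm_le_add_freqProj (v n) R s).trans (add_le_add (hR _ (hK n)) hn)
    _ = ε := ENNReal.add_halves ε

end WeakCompactness

section MinimizingSequences

open Metric
open scoped ENNReal

variable {N : ℕ} {p M : ℝ} {u v : ℕ → H2 N} {U : H2 N}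

lemma H2.freqProj_translate_zero (U : H2 N) (R : ℝ) (a : Esp N) :
    freqProj (ball 0 R) (U.translate a).uLp 0 = freqProj (ball 0 R) U.uLp a :=
  freqProj_comp_add_right measurableSet_ball measure_ball_lt_top.ne U.u_mem a _

lemma H2.nontriv_of_freqProj_ne_zero {R : ℝ} {x : Esp N}
    (h : freqProj (ball 0 R) U.uLp x ≠ 0) : U.Nontriv := fun hU ↦ h <| by
  have hzero : U.uLp = 0 := (MemLp.toLp_eq_toLp_iff U.u_mem MemLp.zero).2 hU
  rw [hzero, freqProj_zero measurableSet_ball measure_ball_lt_top.ne]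

theorem IsSubcritical.exists_subseq_translate_tendstoWeakly (hp : IsSubcritical N p)
    (hu : ∀ᶠ n in atTop, Kfun (u n) ≤ M ∧ 1 / 2 ≤ rLp p (u n).u) :
    ∃ (ψ : ℕ → ℕ) (xs : ℕ → Esp N) (U : H2 N), StrictMono ψ ∧ U.Nontriv ∧
      H2TendstoWeakly (fun k ↦ (u (ψ k)).translate (xs k)) U := by
  obtain ⟨φ, hφ, huφ⟩ := extraction_of_eventually_atTop hu
  obtain ⟨R, δ, hδ, hlower⟩ := hp.exists_le_norm_freqProj M
  choose x hx using fun n ↦ hlower (u (φ n)) (huφ n).1 (huφ n).2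
  obtain ⟨ψ, U, hψ, hU⟩ := exists_subseq_h2TendstoWeakly
    (v := fun n ↦ (u (φ n)).translate (x n)) (M := M)
    fun n ↦ (H2.Kfun_translate _ _).trans_le (huφ n).1
  have hlim := hU.uLp.tendsto_freqProj (measurableSet_ball (x := 0) (ε := R))
    measure_ball_lt_top.ne 0
  have hδU : δ ≤ ‖freqProj (ball 0 R) U.uLp 0‖ := ge_of_tendsto' hlim.norm fun n ↦
    (hx (ψ n)).trans_eq (congrArg norm (H2.freqProj_translate_zero _ R _).symm)
  exact ⟨φ ∘ ψ, x ∘ ψ, U, hφ.comp hψ,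
    H2.nontriv_of_freqProj_ne_zero (norm_pos_iff.1 (hδ.trans_le hδU)), hU⟩

lemma eq_one_of_one_le_rpow_add_rpow {a b : ℝ} (hp : 2 < p) (ha : 0 < a) (hb : 0 ≤ b)
    (hsq : a ^ 2 + b ^ 2 ≤ 1) (h : 1 ≤ a ^ p + b ^ p) : a = 1 := by
  have ha1 : a ≤ 1 := by nlinarith
  have hb1 : b ≤ 1 := by nlinarith
  have hbp : b ^ p ≤ b ^ 2 := by
    rw [← Real.rpow_two]
    exact Real.rpow_le_rpow_of_exponent_ge_of_imp hb hb1 hp.le fun _ h0 ↦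
      absurd h0 (two_pos.trans hp).ne'
  by_contra hne
  have hap : a ^ p < a ^ 2 := by
    rw [← Real.rpow_two]
    exact Real.rpow_lt_rpow_of_exponent_gt ha (ha1.lt_of_ne hne) hp
  linarith

lemma IsSubcritical.eLpNorm_eq_ofReal_rLp (hp : IsSubcritical N p) (U : H2 N) :
    eLpNorm U.u (ENNReal.ofReal p) volume = ENNReal.ofReal (rLp p U.u) :=
  (ENNReal.ofReal_toReal (hp.memLp U).2.ne).symm

lemma IsSubcritical.rLp_le_sqrt (hp : IsSubcritical N p) (U : H2 N) :
    rLp p U.u ≤ √(Kfun U / sobolevInf N p) :=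
  Real.le_sqrt_of_sq_le ((le_div_iff₀' hp.sobolevInf_pos).2 (sobolevInf_mul_rLp_sq_le U))

lemma IsSubcritical.one_le_rpow_add_rpow_of_h2TendstoWeakly (hp : IsSubcritical N p)
    (h : H2TendstoWeakly v U) (hv : Tendsto (fun n ↦ rLp p (v n).u) atTop (𝓝 1)) {k : ℝ}
    (hK : Tendsto (fun n ↦ Kfun (v n - U)) atTop (𝓝 k)) :
    1 ≤ rLp p U.u ^ p + √(k / sobolevInf N p) ^ p := by
  obtain ⟨M, hM⟩ := hK.bddAbove_range
  have hweak : TendstoWeakly ℂ (fun n ↦ (v n - U).uLp) 0 := by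
    simpa only [H2.uLp_sub] using h.uLp.sub_limit
  have hsum (n : ℕ) : U.u + (v n - U).u = (v n).u := by simp
  have hineq := rpow_le_eLpNorm_rpow_add_of_tendsto (a := 1)
    (b := ENNReal.ofReal √(k / sobolevInf N p))
    (c := fun n ↦ ENNReal.ofReal √(Kfun (v n - U) / sobolevInf N p))
    hp.one_le (hp.memLp U) (fun n ↦ (v n - U).u_mem.1)
    (fun s hs ↦ hp.tendsto_eLpNorm_restrict_of_tendstoWeakly_zero
      (fun n ↦ hM (Set.mem_range_self n)) hweak hs)
    (by simpa only [hsum, hp.eLpNorm_eq_ofReal_rLp, ENNReal.ofReal_one] using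
      ENNReal.tendsto_ofReal hv)
    (fun n ↦ (hp.eLpNorm_eq_ofReal_rLp _).trans_le
      (ENNReal.ofReal_le_ofReal (hp.rLp_le_sqrt (v n - U))))
    (ENNReal.tendsto_ofReal (hK.div_const _).sqrt)
  have hU := rLp_nonneg p U.u
  rwa [ENNReal.one_rpow, hp.eLpNorm_eq_ofReal_rLp, ENNReal.ofReal_rpow_of_nonneg hU hp.pos.le,
    ENNReal.ofReal_rpow_of_nonneg (Real.sqrt_nonneg _) hp.pos.le,
    ← ENNReal.ofReal_add (by positivity) (by positivity), ENNReal.one_le_ofReal] at hineq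

/- The normalised energies of `U` and of the remainders `v n - U` add up to `1`; as `p > 2`, their
`L^p` masses can only do so if all of it is carried by `U`. -/
theorem IsSubcritical.isMinimizer_of_h2TendstoWeakly (hp : IsSubcritical N p)
    (h : H2TendstoWeakly v U) (hU : U.Nontriv)
    (hv : Tendsto (fun n ↦ rLp p (v n).u) atTop (𝓝 1))
    (hK : Tendsto (fun n ↦ Kfun (v n)) atTop (𝓝 (sobolevInf N p))) :
    rLp p U.u = 1 ∧ Kfun U = sobolevInf N p := by
  have hI := hp.sobolevInf_pos
  have hrem : Tendsto (fun n ↦ Kfun (v n - U)) atTop (𝓝 (sobolevInf N p - Kfun U)) := by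
    simpa only [sub_sub_cancel] using hK.sub h.tendsto_Kfun_sub_Kfun_sub
  have hle : Kfun U ≤ sobolevInf N p :=
    sub_nonneg.1 (ge_of_tendsto' hrem fun n ↦ H2.Kfun_nonneg _)
  have hUsq : rLp p U.u ^ 2 ≤ Kfun U / sobolevInf N p :=
    (le_div_iff₀' hI).2 (sobolevInf_mul_rLp_sq_le U)
  have hone : rLp p U.u = 1 := by
    refine eq_one_of_one_le_rpow_add_rpow hp.two_lt (hp.rLp_pos hU) (Real.sqrt_nonneg _) ?_
      (hp.one_le_rpow_add_rpow_of_h2TendstoWeakly h hv hrem)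
    rw [Real.sq_sqrt (div_nonneg (sub_nonneg.2 hle) hI.le), sub_div, div_self hI.ne']
    linarith
  exact ⟨hone, hle.antisymm (sobolevInf_le hone)⟩

lemma H2TendstoTrans.of_tendsto_Kfun_sub {xs : ℕ → Esp N}
    (h : Tendsto (fun k ↦ Kfun ((v k).translate (xs k) - U)) atTop (𝓝 0)) :
    H2TendstoTrans v xs U := by
  have hsqrt : Tendsto (fun k ↦ ENNReal.ofReal √(Kfun ((v k).translate (xs k) - U))) atTop
      (𝓝 0) := by
    simpa using ENNReal.tendsto_ofReal h.sqrt
  have hu : Tendsto (fun k ↦ eLpNorm ((v k).translate (xs k) - U).u 2 volume) atTop (𝓝 0) :=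
    tendsto_of_tendsto_of_tendsto_of_le_of_le tendsto_const_nhds hsqrt (fun _ ↦ zero_le)
      fun k ↦ H2.eLpNorm_u_le _
  have hlapl : Tendsto (fun k ↦ eLpNorm ((v k).translate (xs k) - U).lapl 2 volume) atTop (𝓝 0) :=
    tendsto_of_tendsto_of_tendsto_of_le_of_le tendsto_const_nhds hsqrt (fun _ ↦ zero_le)
      fun k ↦ H2.eLpNorm_lapl_le _
  refine ⟨hu, fun i ↦ ?_, hlapl⟩
  exact tendsto_of_tendsto_of_tendsto_of_le_of_le tendsto_const_nhds
    (by simpa only [add_zero] using hu.add hlapl) (fun _ ↦ zero_le)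
    fun k ↦ ((v k).translate (xs k) - U).eLpNorm_grad_le i

theorem IsSubcritical.exists_subseq_h2TendstoTrans (hp : IsSubcritical N p)
    (hu : Tendsto (fun n ↦ rLp p (u n).u) atTop (𝓝 1))
    (hK : Tendsto (fun n ↦ Kfun (u n)) atTop (𝓝 (sobolevInf N p))) :
    ∃ (ψ : ℕ → ℕ) (xs : ℕ → Esp N) (U : H2 N), StrictMono ψ ∧ rLp p U.u = 1 ∧
      Kfun U = sobolevInf N p ∧ H2TendstoTrans (fun k ↦ u (ψ k)) xs U := by
  obtain ⟨ψ, xs, U, hψ, hU, hweak⟩ := hp.exists_subseq_translate_tendstoWeakly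
    ((hK.eventually_le_const (lt_add_one _)).and (hu.eventually_const_le one_half_lt_one))
  have hvK : Tendsto (fun k ↦ Kfun ((u (ψ k)).translate (xs k))) atTop (𝓝 (sobolevInf N p)) := by
    simpa only [H2.Kfun_translate, Function.comp_def] using hK.comp hψ.tendsto_atTop
  have hvp : Tendsto (fun k ↦ rLp p ((u (ψ k)).translate (xs k)).u) atTop (𝓝 1) :=
    (hu.comp hψ.tendsto_atTop).congr fun k ↦ (rLp_comp_add_right p (u (ψ k)).u_mem.1 _).symm
  obtain ⟨hUp, hUK⟩ := hp.isMinimizer_of_h2TendstoWeakly hweak hU hvp hvK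
  refine ⟨ψ, xs, U, hψ, hUp, hUK, .of_tendsto_Kfun_sub ?_⟩
  simpa only [sub_sub_cancel, hUK, sub_self] using hvK.sub hweak.tendsto_Kfun_sub_Kfun_sub

end MinimizingSequences

lemma isSubcritical_two_mul_add_two {N : ℕ} {σ : ℝ} (hσ : 0 < σ)
    (h : N ≤ 4 ∨ 2 * σ + 2 < 2 * N / (N - 4)) : IsSubcritical N (2 * σ + 2) where
  two_lt := by linarith
  lt_two := by
    have hexp : N * (1 / 2 - 1 / (2 * σ + 2)) = N * σ / (2 * σ + 2) := by
      field_simp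
      ring
    rw [hexp, div_lt_iff₀ (by linarith)]
    rcases le_or_gt N 4 with hN | hN
    · have : (N : ℝ) ≤ 4 := by exact_mod_cast hN
      nlinarith
    · have hN4 : (4 : ℝ) < N := by exact_mod_cast hN
      have hlt := h.resolve_left hN.not_ge
      rw [lt_div_iff₀ (by linarith)] at hlt
      nlinarith

lemma two_mul_add_two_mul_gnExponent (N : ℕ) {σ : ℝ} (hσ : 0 < σ) :
    (2 * σ + 2) * gnExponent N (2 * σ + 2) = N * σ / 2 := by
  rw [gnExponent]
  field_simp
  ring

lemma two_mul_add_two_mul_one_sub_gnExponent (N : ℕ) {σ : ℝ} (hσ : 0 < σ) :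
    (2 * σ + 2) * (1 - gnExponent N (2 * σ + 2)) = 2 + 2 * σ - N * σ / 2 := by
  rw [mul_one_sub, two_mul_add_two_mul_gnExponent N hσ, add_comm]

/-- `I > 0`; minimizing sequences for `I` are precompact in `H²` modulo
translations (in particular minimizers exist); and every minimizer of `K` under
`‖u‖_{L^{2σ+2}} = 1` is an optimal function for the Gagliardo–Nirenberg–Sobolev
inequality, i.e. its quotient realizes `B(N,σ)`. -/
theorem stmt15 (N : ℕ) (σ : ℝ) (hN : 1 ≤ N)
    (hσ : (N ≤ 4 ∧ 0 < σ) ∨ (5 ≤ N ∧ 0 < σ ∧ 2 * σ + 2 < 2 * (N : ℝ) / ((N : ℝ) - 4))) :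
    0 < Iconst N σ ∧
    (∀ u : ℕ → H2 N,
      Tendsto (fun n => rLp (2 * σ + 2) (u n).u) atTop (nhds 1) →
      Tendsto (fun n => Kfun (u n)) atTop (nhds (Iconst N σ)) →
      ∃ (ψ : ℕ → ℕ) (xs : ℕ → Esp N) (U : H2 N), StrictMono ψ ∧
        rLp (2 * σ + 2) U.u = 1 ∧ Kfun U = Iconst N σ ∧
        H2TendstoTrans (fun k => u (ψ k)) xs U) ∧
    (∀ U : H2 N, rLp (2 * σ + 2) U.u = 1 → Kfun U = Iconst N σ →
      U.pPow σ /
          (rLp 2 U.lapl ^ ((N : ℝ) * σ / 2) * rLp 2 U.u ^ (2 + 2 * σ - (N : ℝ) * σ / 2)) =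
        GNconst N σ) := by
  have hσ0 : 0 < σ := hσ.elim (fun h ↦ h.2) fun h ↦ h.2.1
  have hp : IsSubcritical N (2 * σ + 2) :=
    isSubcritical_two_mul_add_two hσ0 (hσ.imp (fun h ↦ h.1) fun h ↦ h.2.2)
  refine ⟨hp.sobolevInf_pos, fun u hu hK ↦ hp.exists_subseq_h2TendstoTrans hu hK,
    fun U hU hK ↦ ?_⟩
  have hgreatest := hp.isGreatest_of_Kfun_eq_sobolevInf hN hU hK
  simp only [two_mul_add_two_mul_gnExponent N hσ0,
    two_mul_add_two_mul_one_sub_gnExponent N hσ0] at hgreatest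
  exact hgreatest.csSup_eq.symm

end
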